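/- arXiv:1712.02460 — 8 statements merged into one kernel-verified Lean document; each statement's English description precedes it below -/
import Mathlib

section
/- In any Latin square L of order n ≥ 2, every partial transversal T of deficit d is contained in a cover of L of size n + ⌈d/2⌉. -/
/-!
Let `R`, `K`, `S` be the rows, columns and symbols missed by `T`; each has exactly `d` elements.
Two lines of different kinds meet in exactly one entry, so one entry can cover two missed lines
at once. With `m = ⌈d/2⌉` and `k = ⌊d/2⌋`, split each of `R`, `K`, `S` into a part of size `m` and
a part of size `k`. Pairing the big part of `R` with the big part of `K`, the small part of `R`
with the small part of `S`, and the small part of `K` with the big part of `S` covers everything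
with at most `m + k + m = d + m` entries (`exists_pairing_cover`, applied three times).
Together with `T` this is a cover of size at most `n + m`. Since `n + m ≤ n ^ 2` for `n ≥ 2`,
it can be padded by arbitrary entries to a cover of size exactly `n + m`.
-/

/-- The set of entries `(i, j, L i j)` of a square array `L`. -/
def lsEntries {ι : Type} [Fintype ι] [DecidableEq ι] (L : ι → ι → ι) :
    Finset (ι × ι × ι) :=
  Finset.univ.image fun p : ι × ι => (p.1, p.2, L p.1 p.2)

/-- `L` is a Latin square: every row and every column is a bijection. -/
def IsLatin {ι : Type} (L : ι → ι → ι) : Prop :=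
  (∀ i, Function.Bijective fun j => L i j) ∧ (∀ j, Function.Bijective fun i => L i j)

/-- A cover: a set of entries representing every row, column and symbol. -/
def IsLSCover {ι : Type} [Fintype ι] [DecidableEq ι] (L : ι → ι → ι)
    (C : Finset (ι × ι × ι)) : Prop :=
  C ⊆ lsEntries L ∧ (∀ i : ι, ∃ e ∈ C, e.1 = i) ∧ (∀ j : ι, ∃ e ∈ C, e.2.1 = j) ∧
    (∀ s : ι, ∃ e ∈ C, e.2.2 = s)

/-- A minimal cover: no entry can be removed keeping it a cover. -/
def IsMinimalLSCover {ι : Type} [Fintype ι] [DecidableEq ι] (L : ι → ι → ι)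
    (C : Finset (ι × ι × ι)) : Prop :=
  IsLSCover L C ∧ ∀ e ∈ C, ¬ IsLSCover L (C.erase e)

/-- A partial transversal: a set of entries representing every line at most once. -/
def IsPT {ι : Type} [Fintype ι] [DecidableEq ι] (L : ι → ι → ι)
    (T : Finset (ι × ι × ι)) : Prop :=
  T ⊆ lsEntries L ∧
    ∀ e ∈ T, ∀ f ∈ T, e ≠ f → e.1 ≠ f.1 ∧ e.2.1 ≠ f.2.1 ∧ e.2.2 ≠ f.2.2

/-- A maximal partial transversal: not contained in any larger partial transversal. -/
def IsMaximalPT {ι : Type} [Fintype ι] [DecidableEq ι] (L : ι → ι → ι)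
    (T : Finset (ι × ι × ι)) : Prop :=
  IsPT L T ∧ ∀ e ∈ lsEntries L, e ∉ T → ¬ IsPT L (insert e T)

/-- If any `a` and `b` meet in an entry `f a b`, then two sets of at most `m` lines each
can be covered by `m` entries: match the lines of one set with those of the other. -/
theorem exists_pairing_cover {ι E : Type} [Fintype ι] [DecidableEq E]
    (f : ι → ι → E) (A B : Finset ι) (m : ℕ) (hA : A.card ≤ m) (hB : B.card ≤ m)
    (hm : m ≤ Fintype.card ι) :
    ∃ X : Finset E, X.card ≤ m ∧ (∀ x ∈ X, ∃ a b, f a b = x) ∧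
      (∀ a ∈ A, ∃ b, f a b ∈ X) ∧ (∀ b ∈ B, ∃ a, f a b ∈ X) := by
  obtain ⟨A', hAA, -, hA'⟩ := Finset.exists_subsuperset_card_eq (Finset.subset_univ A) hA hm
  obtain ⟨B', hBB, -, hB'⟩ := Finset.exists_subsuperset_card_eq (Finset.subset_univ B) hB hm
  let g : A' ≃ B' := Finset.equivOfCardEq (hA'.trans hB'.symm)
  refine ⟨A'.attach.image fun a : A' => f a.1 (g a).1, ?_, ?_, ?_, ?_⟩
  · exact Finset.card_image_le.trans (by simp [hA'])
  · intro x hx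
    obtain ⟨a, -, rfl⟩ := Finset.mem_image.1 hx
    exact ⟨_, _, rfl⟩
  · intro a ha
    exact ⟨g ⟨a, hAA ha⟩, Finset.mem_image.2 ⟨⟨a, hAA ha⟩, Finset.mem_attach _ _, rfl⟩⟩
  · intro b hb
    refine ⟨g.symm ⟨b, hBB hb⟩, Finset.mem_image.2 ⟨g.symm ⟨b, hBB hb⟩, Finset.mem_attach _ _, ?_⟩⟩
    simp

/-- The `d` lines of one kind missed by `T` (`p` reads off the coordinate of that kind) split into
a part of size `⌈d/2⌉` and a part of size `⌊d/2⌋`. -/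
theorem exists_split_missed {n d : ℕ} {E : Type} (T : Finset E)
    (p : E → Fin n) (hp : Set.InjOn p T) (hd : T.card + d = n) :
    ∃ A B : Finset (Fin n), A.card = (d + 1) / 2 ∧ B.card = d / 2 ∧
      ∀ i, (∃ e ∈ T, p e = i) ∨ i ∈ A ∨ i ∈ B := by
  have h1 : (T.image p)ᶜ.card = d := by
    rw [Finset.card_compl, Finset.card_image_of_injOn hp, Fintype.card_fin]
    omega
  obtain ⟨A, hA, hAc⟩ := Finset.exists_subset_card_eq
    (show (d + 1) / 2 ≤ (T.image p)ᶜ.card by omega)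
  refine ⟨A, (T.image p)ᶜ \ A, hAc, ?_, fun i => ?_⟩
  · rw [Finset.card_sdiff_of_subset hA]
    omega
  · by_cases h : i ∈ T.image p
    · exact Or.inl (Finset.mem_image.1 h)
    · by_cases h' : i ∈ A <;> simp_all

/-- In any Latin square `L` of order `n ≥ 2`, every partial transversal `T` of deficit `d`
is contained in a cover of `L` of size `n + ⌈d/2⌉`. -/
theorem stmt0 {n : ℕ} (hn : 2 ≤ n) (L : Fin n → Fin n → Fin n) (hL : IsLatin L)
    (T : Finset (Fin n × Fin n × Fin n)) (d : ℕ)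
    (hT : IsPT L T) (hd : T.card + d = n) :
    ∃ C : Finset (Fin n × Fin n × Fin n),
      IsLSCover L C ∧ T ⊆ C ∧ C.card = n + (d + 1) / 2 := by
  have hcard : (lsEntries L).card = n * n := by
    rw [lsEntries, Finset.card_image_of_injective]
    · simp
    · rintro ⟨a, b⟩ ⟨c, e⟩ h
      simp_all
  have hmem : ∀ i j, (i, j, L i j) ∈ lsEntries L := fun i j =>
    Finset.mem_image.2 ⟨(i, j), Finset.mem_univ _, rfl⟩
  obtain ⟨R1, R2, hR1, hR2, hR⟩ := exists_split_missed T (fun e => e.1)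
    (fun e he f hf h => by_contra fun hne => (hT.2 e he f hf hne).1 h) hd
  obtain ⟨K1, K2, hK1, hK2, hK⟩ := exists_split_missed T (fun e => e.2.1)
    (fun e he f hf h => by_contra fun hne => (hT.2 e he f hf hne).2.1 h) hd
  obtain ⟨S1, S2, hS1, hS2, hS⟩ := exists_split_missed T (fun e => e.2.2)
    (fun e he f hf h => by_contra fun hne => (hT.2 e he f hf hne).2.2 h) hd
  -- `col i s` is the column of symbol `s` in row `i`; `row j s` is its row in column `j`.
  choose col hcol using fun i => (hL.1 i).2
  choose row hrow using fun j => (hL.2 j).2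
  simp only at hcol hrow
  obtain ⟨X, hXc, hX, hXa, hXb⟩ := exists_pairing_cover (fun i j => (i, j, L i j)) R1 K1
    ((d + 1) / 2) (by omega) (by omega) (by rw [Fintype.card_fin]; omega)
  obtain ⟨Y, hYc, hY, hYa, hYb⟩ := exists_pairing_cover (fun i s => (i, col i s, s)) R2 S2
    (d / 2) (by omega) (by omega) (by rw [Fintype.card_fin]; omega)
  obtain ⟨Z, hZc, hZ, hZa, hZb⟩ := exists_pairing_cover (fun j s => (row j s, j, s)) K2 S1
    ((d + 1) / 2) (by omega) (by omega) (by rw [Fintype.card_fin]; omega)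
  have hsub : T ∪ (X ∪ (Y ∪ Z)) ⊆ lsEntries L := by
    refine Finset.union_subset hT.1 (Finset.union_subset ?_ (Finset.union_subset ?_ ?_))
    · intro x hx
      obtain ⟨i, j, rfl⟩ := hX x hx
      exact hmem i j
    · intro x hx
      obtain ⟨i, s, rfl⟩ := hY x hx
      simpa only [hcol] using hmem i (col i s)
    · intro x hx
      obtain ⟨j, s, rfl⟩ := hZ x hx
      simpa only [hrow] using hmem (row j s) j
  have hle : (T ∪ (X ∪ (Y ∪ Z))).card ≤ n + (d + 1) / 2 := by
    have h1 := Finset.card_union_le T (X ∪ (Y ∪ Z))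
    have h2 := Finset.card_union_le X (Y ∪ Z)
    have h3 := Finset.card_union_le Y Z
    omega
  have hroom : n + (d + 1) / 2 ≤ (lsEntries L).card := by
    rw [hcard]
    have : 2 * n ≤ n * n := Nat.mul_le_mul_right n hn
    omega
  obtain ⟨C, hC, hCL, hCc⟩ := Finset.exists_subsuperset_card_eq hsub hle hroom
  have hTC : T ⊆ C := fun x hx => hC (by simp [hx])
  have hXC : X ⊆ C := fun x hx => hC (by simp [hx])
  have hYC : Y ⊆ C := fun x hx => hC (by simp [hx])
  have hZC : Z ⊆ C := fun x hx => hC (by simp [hx])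
  refine ⟨C, ⟨hCL, fun i => ?_, fun j => ?_, fun s => ?_⟩, hTC, hCc⟩
  · rcases hR i with ⟨e, he, h⟩ | h | h
    · exact ⟨e, hTC he, h⟩
    · obtain ⟨j, hj⟩ := hXa i h
      exact ⟨_, hXC hj, rfl⟩
    · obtain ⟨s, hs⟩ := hYa i h
      exact ⟨_, hYC hs, rfl⟩
  · rcases hK j with ⟨e, he, h⟩ | h | h
    · exact ⟨e, hTC he, h⟩
    · obtain ⟨i, hi⟩ := hXb j h
      exact ⟨_, hXC hi, rfl⟩
    · obtain ⟨s, hs⟩ := hZa j h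
      exact ⟨_, hZC hs, rfl⟩
  · rcases hS s with ⟨e, he, h⟩ | h | h
    · exact ⟨e, hTC he, h⟩
    · obtain ⟨j, hj⟩ := hZb s h
      exact ⟨_, hZC hj, rfl⟩
    · obtain ⟨i, hi⟩ := hYb s h
      exact ⟨_, hYC hi, rfl⟩
end

section
/- In any Latin square L of order n ≥ 2, if T is a maximal partial transversal of deficit d, then the smallest cover of L containing T has size exactly n + ⌈d/2⌉. -/
/-- The values of a coordinate `π` (row, column or symbol) that do not occur in `T`. -/
def missed {n : ℕ} (T : Finset (Fin n × Fin n × Fin n)) (π : Fin n × Fin n × Fin n → Fin n) :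
    Finset (Fin n) :=
  (T.image π)ᶜ

lemma mem_missed {n : ℕ} {T : Finset (Fin n × Fin n × Fin n)}
    {π : Fin n × Fin n × Fin n → Fin n} {i : Fin n} :
    i ∈ missed T π ↔ ∀ e ∈ T, π e ≠ i := by
  simp [missed]

lemma card_missed {n d : ℕ} {T : Finset (Fin n × Fin n × Fin n)}
    {π : Fin n × Fin n × Fin n → Fin n} (hd : T.card + d = n)
    (hπ : ∀ e ∈ T, ∀ f ∈ T, e ≠ f → π e ≠ π f) : (missed T π).card = d := by
  have h : (T.image π).card = T.card :=
    Finset.card_image_of_injOn fun e he f hf hef => by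
      by_contra hne
      exact hπ e he f hf hne hef
  rw [missed, Finset.card_compl, h, Fintype.card_fin]
  omega

/-- Every missed value must be supplied by an entry of `C` outside `T`. -/
lemma card_missed_le {n : ℕ} {T C : Finset (Fin n × Fin n × Fin n)}
    {π : Fin n × Fin n × Fin n → Fin n} (hC : ∀ i, ∃ e ∈ C, π e = i) :
    (missed T π).card ≤ ∑ e ∈ C \ T, if π e ∈ missed T π then 1 else 0 := by
  rw [← Finset.card_filter]
  refine (Finset.card_le_card ?_).trans (Finset.card_image_le (f := π))
  intro i hi
  obtain ⟨e, he, rfl⟩ := hC i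
  have heT : e ∉ T := fun h => mem_missed.1 hi e h rfl
  exact Finset.mem_image_of_mem _ (by simp [he, heT, hi])

lemma not_three_missed {n : ℕ} {L : Fin n → Fin n → Fin n} {T : Finset (Fin n × Fin n × Fin n)}
    (hT : IsMaximalPT L T) {e : Fin n × Fin n × Fin n} (he : e ∈ lsEntries L) :
    ¬ (e.1 ∈ missed T (fun e => e.1) ∧ e.2.1 ∈ missed T (fun e => e.2.1) ∧
      e.2.2 ∈ missed T (fun e => e.2.2)) := by
  rintro ⟨h1, h2, h3⟩
  rw [mem_missed] at h1 h2 h3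
  refine hT.2 e he (fun h => h1 e h rfl) ⟨Finset.insert_subset he hT.1.1, ?_⟩
  intro a ha b hb hab
  rcases Finset.mem_insert.1 ha with rfl | ha' <;>
    rcases Finset.mem_insert.1 hb with rfl | hb'
  · exact absurd rfl hab
  · exact ⟨(h1 b hb').symm, (h2 b hb').symm, (h3 b hb').symm⟩
  · exact ⟨h1 a ha', h2 a ha', h3 a ha'⟩
  · exact hT.1.2 a ha' b hb' hab

lemma cover_card_ge {n d : ℕ} {L : Fin n → Fin n → Fin n}
    {T C : Finset (Fin n × Fin n × Fin n)} (hT : IsMaximalPT L T) (hd : T.card + d = n)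
    (hC : IsLSCover L C) (hTC : T ⊆ C) : n + (d + 1) / 2 ≤ C.card := by
  have r := card_missed (π := fun e => e.1) hd fun e he f hf h => (hT.1.2 e he f hf h).1
  have c := card_missed (π := fun e => e.2.1) hd fun e he f hf h => (hT.1.2 e he f hf h).2.1
  have s := card_missed (π := fun e => e.2.2) hd fun e he f hf h => (hT.1.2 e he f hf h).2.2
  have r' := card_missed_le (T := T) (π := fun e => e.1) hC.2.1
  have c' := card_missed_le (T := T) (π := fun e => e.2.1) hC.2.2.1
  have s' := card_missed_le (T := T) (π := fun e => e.2.2) hC.2.2.2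
  -- Each new entry covers at most two of the missed lines.
  have key : ∑ e ∈ C \ T, ((if e.1 ∈ missed T (fun e => e.1) then 1 else 0) +
      (if e.2.1 ∈ missed T (fun e => e.2.1) then 1 else 0) +
      (if e.2.2 ∈ missed T (fun e => e.2.2) then 1 else 0)) ≤ (C \ T).card * 2 := by
    refine Finset.sum_le_card_nsmul _ _ _ fun e he => ?_
    have := not_three_missed hT (hC.1 (Finset.mem_sdiff.1 he).1)
    split_ifs <;> simp_all
  rw [Finset.sum_add_distrib, Finset.sum_add_distrib] at key
  have hcard := Finset.card_sdiff_add_card_eq_card hTC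
  omega

/-- The elements of `A` are listed by a function on `ℕ`, with arbitrary values beyond `A.card`. -/
lemma exists_enum {α : Type} [Nonempty α] (A : Finset α) :
    ∃ f : ℕ → α, ∀ a ∈ A, ∃ i < A.card, f i = a := by
  classical
  refine ⟨fun i => if h : i < A.card then (A.equivFin.symm ⟨i, h⟩ : α)
    else Classical.arbitrary α, fun a ha => ⟨A.equivFin ⟨a, ha⟩, Fin.is_lt _, ?_⟩⟩
  simp

lemma exists_cover_card_le {n d : ℕ} (hn : 2 ≤ n) {L : Fin n → Fin n → Fin n} (hL : IsLatin L)
    {T : Finset (Fin n × Fin n × Fin n)} (hT : IsPT L T) (hd : T.card + d = n) :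
    ∃ C, IsLSCover L C ∧ T ⊆ C ∧ C.card ≤ n + (d + 1) / 2 := by
  have : Nonempty (Fin n) := ⟨⟨0, by omega⟩⟩
  obtain ⟨r, hr⟩ := exists_enum (missed T fun e => e.1)
  obtain ⟨c, hc⟩ := exists_enum (missed T fun e => e.2.1)
  obtain ⟨s, hs⟩ := exists_enum (missed T fun e => e.2.2)
  rw [card_missed hd fun e he f hf h => (hT.2 e he f hf h).1] at hr
  rw [card_missed hd fun e he f hf h => (hT.2 e he f hf h).2.1] at hc
  rw [card_missed hd fun e he f hf h => (hT.2 e he f hf h).2.2] at hs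
  choose colOf hcol using fun i => (hL.1 i).2
  choose rowOf hrow using fun j => (hL.2 j).2
  obtain ⟨m, hm⟩ : ∃ m, m = (d + 1) / 2 := ⟨_, rfl⟩
  -- For odd `d` the last index of `F₃` reads a junk column `c d`: only its symbol is needed.
  let F₁ : ℕ → Fin n × Fin n × Fin n := fun i => (r i, c i, L (r i) (c i))
  let F₂ : ℕ → Fin n × Fin n × Fin n := fun i => (r (m + i), colOf (r (m + i)) (s i), s i)
  let F₃ : ℕ → Fin n × Fin n × Fin n := fun i =>
    (rowOf (c (m + i)) (s (d - m + i)), c (m + i), s (d - m + i))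
  let A₁ := (Finset.range m).image F₁
  let A₂ := (Finset.range (d - m)).image F₂
  let A₃ := (Finset.range m).image F₃
  have m₁ : ∀ i < m, F₁ i ∈ T ∪ (A₁ ∪ (A₂ ∪ A₃)) := fun i hi => by
    have : F₁ i ∈ A₁ := Finset.mem_image_of_mem _ (Finset.mem_range.2 hi)
    simp [this]
  have m₂ : ∀ i < d - m, F₂ i ∈ T ∪ (A₁ ∪ (A₂ ∪ A₃)) := fun i hi => by
    have : F₂ i ∈ A₂ := Finset.mem_image_of_mem _ (Finset.mem_range.2 hi)
    simp [this]
  have m₃ : ∀ i < m, F₃ i ∈ T ∪ (A₁ ∪ (A₂ ∪ A₃)) := fun i hi => by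
    have : F₃ i ∈ A₃ := Finset.mem_image_of_mem _ (Finset.mem_range.2 hi)
    simp [this]
  refine ⟨T ∪ (A₁ ∪ (A₂ ∪ A₃)), ⟨?_, fun i => ?_, fun j => ?_, fun k => ?_⟩,
    Finset.subset_union_left, ?_⟩
  · refine Finset.union_subset hT.1 (Finset.union_subset ?_ (Finset.union_subset ?_ ?_)) <;>
      refine Finset.image_subset_iff.2 fun i _ => Finset.mem_image.2 ?_
    · exact ⟨(r i, c i), Finset.mem_univ _, rfl⟩
    · exact ⟨((F₂ i).1, (F₂ i).2.1), Finset.mem_univ _,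
        Prod.ext rfl (Prod.ext rfl (hcol (r (m + i)) (s i)))⟩
    · exact ⟨((F₃ i).1, (F₃ i).2.1), Finset.mem_univ _,
        Prod.ext rfl (Prod.ext rfl (hrow (c (m + i)) (s (d - m + i))))⟩
  · by_cases h : i ∈ missed T fun e => e.1
    · obtain ⟨a, ha, rfl⟩ := hr i h
      by_cases ham : a < m
      · exact ⟨_, m₁ a ham, rfl⟩
      · refine ⟨_, m₂ (a - m) (by omega), ?_⟩
        simp only [F₂, Nat.add_sub_cancel' (not_lt.1 ham)]
    · rw [mem_missed] at h
      push Not at h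
      obtain ⟨e, he, h⟩ := h
      exact ⟨e, Finset.mem_union_left _ he, h⟩
  · by_cases h : j ∈ missed T fun e => e.2.1
    · obtain ⟨a, ha, rfl⟩ := hc j h
      by_cases ham : a < m
      · exact ⟨_, m₁ a ham, rfl⟩
      · refine ⟨_, m₃ (a - m) (by omega), ?_⟩
        simp only [F₃, Nat.add_sub_cancel' (not_lt.1 ham)]
    · rw [mem_missed] at h
      push Not at h
      obtain ⟨e, he, h⟩ := h
      exact ⟨e, Finset.mem_union_left _ he, h⟩
  · by_cases h : k ∈ missed T fun e => e.2.2
    · obtain ⟨a, ha, rfl⟩ := hs k h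
      by_cases ham : a < d - m
      · exact ⟨_, m₂ a ham, rfl⟩
      · refine ⟨_, m₃ (a - (d - m)) (by omega), ?_⟩
        simp only [F₃, Nat.add_sub_cancel' (not_lt.1 ham)]
    · rw [mem_missed] at h
      push Not at h
      obtain ⟨e, he, h⟩ := h
      exact ⟨e, Finset.mem_union_left _ he, h⟩
  · have h₁ : A₁.card ≤ m := Finset.card_image_le.trans (Finset.card_range m).le
    have h₂ : A₂.card ≤ d - m := Finset.card_image_le.trans (Finset.card_range _).le
    have h₃ : A₃.card ≤ m := Finset.card_image_le.trans (Finset.card_range m).le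
    have u₁ := Finset.card_union_le T (A₁ ∪ (A₂ ∪ A₃))
    have u₂ := Finset.card_union_le A₁ (A₂ ∪ A₃)
    have u₃ := Finset.card_union_le A₂ A₃
    omega

/-- If `T` is a maximal partial transversal of deficit `d` in a Latin square of order
`n ≥ 2`, then the smallest cover containing `T` has size exactly `n + ⌈d/2⌉`. -/
theorem stmt1 {n : ℕ} (hn : 2 ≤ n) (L : Fin n → Fin n → Fin n) (hL : IsLatin L)
    (T : Finset (Fin n × Fin n × Fin n)) (d : ℕ)
    (hT : IsMaximalPT L T) (hd : T.card + d = n) :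
    IsLeast {c : ℕ | ∃ C : Finset (Fin n × Fin n × Fin n),
      IsLSCover L C ∧ T ⊆ C ∧ C.card = c} (n + (d + 1) / 2) := by
  constructor
  · obtain ⟨C, hC, hTC, hle⟩ := exists_cover_card_le hn hL hT.1 hd
    exact ⟨C, hC, hTC, hle.antisymm (cover_card_ge hT hd hC hTC)⟩
  · rintro _ ⟨C, hC, hTC, rfl⟩
    exact cover_card_ge hT hd hC hTC
end

section
/- Let L be a Latin square of order n ≥ 1. Any cover of L of size n + a contains a partial transversal of deficit 2a (i.e., a partial transversal of size n − 2a). -/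
/-- A set of representatives in `C` for the fibres of `f`, described through the number of
elements of `C` that it omits. -/
lemma exists_representatives {α : Type} [DecidableEq α] {n a : ℕ} (C : Finset α)
    (f : α → Fin n) (hf : ∀ i, ∃ e ∈ C, f e = i) (hcard : C.card = n + a) :
    ∃ R ⊆ C, (∀ e ∈ R, ∀ e' ∈ R, f e = f e' → e = e') ∧ (C \ R).card = a := by
  choose g hgC hg using hf
  have hginj : Function.Injective g := Function.LeftInverse.injective hg
  have hsub : Finset.univ.image g ⊆ C := by
    intro e he
    obtain ⟨i, -, rfl⟩ := Finset.mem_image.1 he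
    exact hgC i
  refine ⟨Finset.univ.image g, hsub, ?_, ?_⟩
  · intro e he e' he' h
    obtain ⟨i, -, rfl⟩ := Finset.mem_image.1 he
    obtain ⟨j, -, rfl⟩ := Finset.mem_image.1 he'
    rw [hg, hg] at h
    rw [h]
  · rw [Finset.card_sdiff_of_subset hsub, Finset.card_image_of_injective _ hginj,
      Finset.card_univ, Fintype.card_fin, hcard]
    omega

/-- Any cover of size `n + a` of a Latin square of order `n ≥ 1` contains a partial
transversal of deficit `2a` (i.e. of size `n - 2a`). -/
theorem stmt2 {n : ℕ} (hn : 1 ≤ n) (L : Fin n → Fin n → Fin n) (hL : IsLatin L)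
    (a : ℕ) (C : Finset (Fin n × Fin n × Fin n))
    (hC : IsLSCover L C) (hcard : C.card = n + a) :
    ∃ T : Finset (Fin n × Fin n × Fin n),
      T ⊆ C ∧ IsPT L T ∧ T.card = n - 2 * a := by
  obtain ⟨hCL, hrow, hcol, hsym⟩ := hC
  obtain ⟨R₁, hR₁, hinj₁, hc₁⟩ := exists_representatives C (fun e => e.1) hrow hcard
  obtain ⟨R₂, -, hinj₂, hc₂⟩ := exists_representatives C (fun e => e.2.1) hcol hcard
  obtain ⟨R₃, -, hinj₃, hc₃⟩ := exists_representatives C (fun e => e.2.2) hsym hcard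
  have hsub : R₁ ∩ R₂ ∩ R₃ ⊆ C := fun e he =>
    hR₁ (Finset.mem_inter.1 (Finset.mem_inter.1 he).1).1
  have hle : n - 2 * a ≤ (R₁ ∩ R₂ ∩ R₃).card := by
    have h₀ := Finset.card_sdiff_add_card_eq_card hsub
    have h₁ : C \ (R₁ ∩ R₂ ∩ R₃) = (C \ R₁ ∪ C \ R₂) ∪ C \ R₃ := by
      rw [← Finset.inf_eq_inter, ← Finset.inf_eq_inter, sdiff_inf, sdiff_inf]
      rfl
    have h₂ := Finset.card_union_le (C \ R₁ ∪ C \ R₂) (C \ R₃)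
    have h₃ := Finset.card_union_le (C \ R₁) (C \ R₂)
    rw [h₁] at h₀
    omega
  obtain ⟨T, hT, hTcard⟩ := Finset.exists_subset_card_eq hle
  refine ⟨T, hT.trans hsub, ⟨(hT.trans hsub).trans hCL, ?_⟩, hTcard⟩
  intro e he f hf hne
  have he' := hT he
  have hf' := hT hf
  simp only [Finset.mem_inter] at he' hf'
  exact ⟨fun h => hne (hinj₁ e he'.1.1 f hf'.1.1 h), fun h => hne (hinj₂ e he'.1.2 f hf'.1.2 h),
    fun h => hne (hinj₃ e he'.2 f hf'.2 h)⟩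
end

section
/- Let L be a Latin square of order n ≥ 2. The minimum size of a cover of L equals n + a if and only if the minimum deficit of a partial transversal of L is either 2a or 2a − 1. -/
lemma mem_lsEntries {ι : Type} [Fintype ι] [DecidableEq ι] (L : ι → ι → ι) (e : ι × ι × ι) :
    e ∈ lsEntries L ↔ L e.1 e.2.1 = e.2.2 := by
  obtain ⟨i, j, s⟩ := e
  simp only [lsEntries, Finset.mem_image, Finset.mem_univ, true_and, Prod.mk.injEq, Prod.exists]
  constructor
  · rintro ⟨a, b, rfl, rfl, rfl⟩
    rfl
  · intro h
    exact ⟨i, j, rfl, rfl, h⟩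

/-- If every line `x` of one kind meets every line `y` of another kind in an entry `f x y`, then
`Y.card` entries suffice to cover the lines in `X` and in `Y`, provided `X.card ≤ Y.card`. -/
lemma exists_pairing {α β E : Type} [Nonempty α] [DecidableEq E] (f : α → β → E)
    (X : Finset α) (Y : Finset β) (h : X.card ≤ Y.card) :
    ∃ F : Finset E, F.card ≤ Y.card ∧ (∀ e ∈ F, ∃ x y, e = f x y) ∧
      (∀ x ∈ X, ∃ y, f x y ∈ F) ∧ (∀ y ∈ Y, ∃ x, f x y ∈ F) := by
  classical
  obtain ⟨Z, hZY, hZ⟩ := Finset.exists_subset_card_eq h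
  let σ : X ≃ Z := Finset.equivOfCardEq hZ.symm
  -- A map sending `Z ⊆ Y` bijectively onto `X`, arbitrary elsewhere.
  let g : β → α := fun y => if hy : y ∈ Z then (σ.symm ⟨y, hy⟩ : α) else Classical.arbitrary α
  refine ⟨Y.image fun y => f (g y) y, Finset.card_image_le, ?_, ?_, ?_⟩
  · intro e he
    obtain ⟨y, -, rfl⟩ := Finset.mem_image.1 he
    exact ⟨_, _, rfl⟩
  · intro x hx
    refine ⟨σ ⟨x, hx⟩, Finset.mem_image.2 ⟨σ ⟨x, hx⟩, hZY (σ ⟨x, hx⟩).2, ?_⟩⟩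
    simp [g]
  · intro y hy
    exact ⟨g y, Finset.mem_image_of_mem _ hy⟩

lemma exists_cover_of_isPT {n : ℕ} (hn : 2 ≤ n) (L : Fin n → Fin n → Fin n) (hL : IsLatin L)
    (T : Finset (Fin n × Fin n × Fin n)) (hT : IsPT L T) (d : ℕ) (hd : T.card + d = n) :
    ∃ C, IsLSCover L C ∧ C.card ≤ n + (d + 1) / 2 := by
  have : Nonempty (Fin n) := ⟨⟨0, by omega⟩⟩
  -- The lines of one kind missed by `T`, split into about half and the rest.
  have missed : ∀ p : Fin n × Fin n × Fin n → Fin n, (∀ e ∈ T, ∀ f ∈ T, p e = p f → e = f) →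
      ∀ k ≤ d, ∃ A B : Finset (Fin n), A.card = k ∧ B.card = d - k ∧
        ∀ i, (∃ e ∈ T, p e = i) ∨ i ∈ A ∨ i ∈ B := by
    intro p hp k hk
    have h1 : (T.image p)ᶜ.card = d := by
      rw [Finset.card_compl, Finset.card_image_of_injOn (fun e he f hf h => hp e he f hf h),
        Fintype.card_fin]
      omega
    obtain ⟨A, hA, hAc⟩ := Finset.exists_subset_card_eq (s := (T.image p)ᶜ) (n := k) (by omega)
    refine ⟨A, (T.image p)ᶜ \ A, hAc, ?_, ?_⟩
    · rw [Finset.card_sdiff_of_subset hA, h1, hAc]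
    · intro i
      by_cases hi : i ∈ T.image p
      · exact Or.inl (Finset.mem_image.1 hi)
      · by_cases hiA : i ∈ A
        · exact Or.inr (Or.inl hiA)
        · exact Or.inr (Or.inr (Finset.mem_sdiff.2 ⟨Finset.mem_compl.2 hi, hiA⟩))
  obtain ⟨R₁, R₂, hR₁, hR₂, hR⟩ := missed (fun e => e.1)
    (fun e he f hf h => by_contra fun hne => (hT.2 e he f hf hne).1 h) ((d + 1) / 2) (by omega)
  obtain ⟨C₁, C₂, hC₁, hC₂, hC⟩ := missed (fun e => e.2.1)
    (fun e he f hf h => by_contra fun hne => (hT.2 e he f hf hne).2.1 h) ((d + 1) / 2) (by omega)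
  obtain ⟨S₁, S₂, hS₁, hS₂, hS⟩ := missed (fun e => e.2.2)
    (fun e he f hf h => by_contra fun hne => (hT.2 e he f hf hne).2.2 h) ((d + 1) / 2) (by omega)
  choose col hcol using fun i => (hL.1 i).2
  choose row hrow using fun j => (hL.2 j).2
  obtain ⟨F, hF, hFe, hFx, hFy⟩ := exists_pairing
    (fun i j => ((i, j, L i j) : Fin n × Fin n × Fin n)) R₁ C₁ (by omega)
  obtain ⟨G, hG, hGe, hGx, hGy⟩ := exists_pairing
    (fun i s => ((i, col i s, s) : Fin n × Fin n × Fin n)) R₂ S₁ (by omega)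
  obtain ⟨H, hH, hHe, hHx, hHy⟩ := exists_pairing
    (fun j s => ((row j s, j, s) : Fin n × Fin n × Fin n)) C₂ S₂ (by omega)
  refine ⟨T ∪ F ∪ G ∪ H, ⟨?_, ?_, ?_, ?_⟩, ?_⟩
  · intro e he
    simp only [Finset.mem_union] at he
    rcases he with ((he | he) | he) | he
    · exact hT.1 he
    · obtain ⟨x, y, rfl⟩ := hFe e he
      exact (mem_lsEntries L _).2 rfl
    · obtain ⟨x, y, rfl⟩ := hGe e he
      exact (mem_lsEntries L _).2 (hcol x y)
    · obtain ⟨x, y, rfl⟩ := hHe e he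
      exact (mem_lsEntries L _).2 (hrow x y)
  · intro i
    rcases hR i with ⟨e, he, h⟩ | h | h
    · exact ⟨e, by simp [he], h⟩
    · obtain ⟨y, hy⟩ := hFx i h
      exact ⟨_, by simp only [Finset.mem_union]; exact Or.inl (Or.inl (Or.inr hy)), rfl⟩
    · obtain ⟨y, hy⟩ := hGx i h
      exact ⟨_, by simp only [Finset.mem_union]; exact Or.inl (Or.inr hy), rfl⟩
  · intro i
    rcases hC i with ⟨e, he, h⟩ | h | h
    · exact ⟨e, by simp [he], h⟩
    · obtain ⟨y, hy⟩ := hFy i h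
      exact ⟨_, by simp only [Finset.mem_union]; exact Or.inl (Or.inl (Or.inr hy)), rfl⟩
    · obtain ⟨y, hy⟩ := hHx i h
      exact ⟨_, by simp only [Finset.mem_union]; exact Or.inr hy, rfl⟩
  · intro i
    rcases hS i with ⟨e, he, h⟩ | h | h
    · exact ⟨e, by simp [he], h⟩
    · obtain ⟨y, hy⟩ := hGy i h
      exact ⟨_, by simp only [Finset.mem_union]; exact Or.inl (Or.inr hy), rfl⟩
    · obtain ⟨y, hy⟩ := hHy i h
      exact ⟨_, by simp only [Finset.mem_union]; exact Or.inr hy, rfl⟩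
  · have h1 := Finset.card_union_le (T ∪ F ∪ G) H
    have h2 := Finset.card_union_le (T ∪ F) G
    have h3 := Finset.card_union_le T F
    omega

lemma le_card_of_cover {n : ℕ} (L : Fin n → Fin n → Fin n)
    (C : Finset (Fin n × Fin n × Fin n)) (hC : IsLSCover L C) : n ≤ C.card := by
  have h : C.image (fun e => e.1) = Finset.univ :=
    Finset.eq_univ_iff_forall.2 fun i => Finset.mem_image.2 (hC.2.1 i)
  simpa [h] using Finset.card_image_le (s := C) (f := fun e => e.1)

/-- The conclusion is `C.card - 3 * (C.card - n) ≤ T.card`, written without subtraction. -/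
lemma exists_isPT_of_cover {n : ℕ} (L : Fin n → Fin n → Fin n)
    (C : Finset (Fin n × Fin n × Fin n)) (hC : IsLSCover L C) :
    ∃ T, IsPT L T ∧ 3 * n ≤ T.card + 2 * C.card := by
  -- A system of representatives in `C` for the lines of one kind.
  have reps : ∀ p : Fin n × Fin n × Fin n → Fin n, (∀ i, ∃ e ∈ C, p e = i) →
      ∃ A ⊆ C, A.card = n ∧ ∀ e ∈ A, ∀ f ∈ A, p e = p f → e = f := by
    intro p hp
    choose r hrC hr using hp
    refine ⟨Finset.univ.image r, ?_, ?_, ?_⟩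
    · intro e he
      obtain ⟨i, -, rfl⟩ := Finset.mem_image.1 he
      exact hrC i
    · rw [Finset.card_image_of_injective _ (Function.LeftInverse.injective hr)]
      simp
    · intro e he f hf h
      obtain ⟨i, -, rfl⟩ := Finset.mem_image.1 he
      obtain ⟨j, -, rfl⟩ := Finset.mem_image.1 hf
      rw [hr, hr] at h
      rw [h]
  obtain ⟨X, hXC, hX, hXi⟩ := reps (fun e => e.1) hC.2.1
  obtain ⟨Y, hYC, hY, hYi⟩ := reps (fun e => e.2.1) hC.2.2.1
  obtain ⟨Z, hZC, hZ, hZi⟩ := reps (fun e => e.2.2) hC.2.2.2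
  refine ⟨X ∩ Y ∩ Z, ⟨?_, ?_⟩, ?_⟩
  · intro e he
    simp only [Finset.mem_inter] at he
    exact hC.1 (hXC he.1.1)
  · intro e he f hf hne
    simp only [Finset.mem_inter] at he hf
    exact ⟨fun h => hne (hXi e he.1.1 f hf.1.1 h), fun h => hne (hYi e he.1.2 f hf.1.2 h),
      fun h => hne (hZi e he.2 f hf.2 h)⟩
  · have h1 := Finset.card_union_add_card_inter X Y
    have h2 := Finset.card_union_add_card_inter (X ∩ Y) Z
    have h3 := Finset.card_le_card (Finset.union_subset hXC hYC)
    have h4 := Finset.card_le_card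
      (Finset.union_subset (Finset.inter_subset_left.trans hXC : X ∩ Y ⊆ C) hZC)
    omega

lemma isPT_card_le {n : ℕ} (L : Fin n → Fin n → Fin n)
    (T : Finset (Fin n × Fin n × Fin n)) (hT : IsPT L T) : T.card ≤ n := by
  have h : Set.InjOn (fun e : Fin n × Fin n × Fin n => e.1) T :=
    fun e he f hf h => by_contra fun hne => (hT.2 e he f hf hne).1 h
  rw [← Finset.card_image_of_injOn h]
  simpa using Finset.card_le_univ (T.image fun e => e.1)

/-- The minimum size of a cover of a Latin square of order `n ≥ 2` is `n + a` if and
only if the minimum deficit of a partial transversal is `2a` or `2a - 1`. -/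
theorem stmt3 {n : ℕ} (hn : 2 ≤ n) (L : Fin n → Fin n → Fin n) (hL : IsLatin L)
    (a : ℕ) :
    IsLeast {c : ℕ | ∃ C : Finset (Fin n × Fin n × Fin n),
        IsLSCover L C ∧ C.card = c} (n + a) ↔
      (IsLeast {d : ℕ | ∃ T : Finset (Fin n × Fin n × Fin n),
          IsPT L T ∧ T.card + d = n} (2 * a) ∨
       IsLeast {d : ℕ | ∃ T : Finset (Fin n × Fin n × Fin n),
          IsPT L T ∧ T.card + d = n} (2 * a - 1)) := by
  -- The least deficit `D` and the least cover size `c`, both attained.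
  obtain ⟨D, hD⟩ : ∃ D, IsLeast {d : ℕ | ∃ T : Finset (Fin n × Fin n × Fin n),
      IsPT L T ∧ T.card + d = n} D :=
    ⟨_, isLeast_csInf ⟨n, ∅, ⟨by simp, by simp⟩, by simp⟩⟩
  obtain ⟨T, hT, hTD⟩ := hD.1
  obtain ⟨C₀, hC₀, hC₀c⟩ := exists_cover_of_isPT hn L hL T hT D hTD
  obtain ⟨c, hc⟩ : ∃ c, IsLeast {c : ℕ | ∃ C : Finset (Fin n × Fin n × Fin n),
      IsLSCover L C ∧ C.card = c} c :=
    ⟨_, isLeast_csInf ⟨_, C₀, hC₀, rfl⟩⟩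
  obtain ⟨C, hC, hCc⟩ := hc.1
  have h1 : c ≤ C₀.card := hc.2 ⟨C₀, hC₀, rfl⟩
  have h2 := le_card_of_cover L C hC
  obtain ⟨T', hT', hT'c⟩ := exists_isPT_of_cover L C hC
  have h3 := isPT_card_le L T' hT'
  have h4 : D ≤ n - T'.card := hD.2 ⟨T', hT', by omega⟩
  constructor
  · intro h
    have h5 := hc.unique h
    have h6 : D = 2 * a ∨ D = 2 * a - 1 := by omega
    rcases h6 with h6 | h6
    · exact Or.inl (h6 ▸ hD)
    · exact Or.inr (h6 ▸ hD)
  · intro h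
    have h5 : D = 2 * a ∨ D = 2 * a - 1 := h.imp hD.unique hD.unique
    have h6 : c = n + a := by omega
    exact h6 ▸ hc
end

section
/- Let L be a Latin square of order n ≥ 2 in which the minimum deficit of a partial transversal is d. Then every minimum cover of L contains a partial transversal of deficit d if d is even, and contains a partial transversal of deficit d + 1 if d is odd. -/
lemma mem_lsEntries_s5 {ι : Type} [Fintype ι] [DecidableEq ι] (L : ι → ι → ι) (i j : ι) :
    (i, j, L i j) ∈ lsEntries L :=
  Finset.mem_image.2 ⟨(i, j), Finset.mem_univ _, rfl⟩

lemma exists_subset_insert {α : Type} [DecidableEq α] [Nonempty α] (S : Finset α) (k : ℕ)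
    (h : S.card ≤ k + 1) : ∃ (a : α) (S' : Finset α), S ⊆ insert a S' ∧ S'.card ≤ k := by
  rcases S.eq_empty_or_nonempty with rfl | ⟨a, ha⟩
  · exact ⟨Classical.arbitrary α, ∅, by simp, by simp⟩
  · refine ⟨a, S.erase a, (Finset.insert_erase ha).ge, ?_⟩
    rw [Finset.card_erase_of_mem ha]
    omega

/-- Sets of at most `d` rows, `d` columns and `d` symbols are covered by at most `⌈3 * d / 2⌉`
entries. The induction removes two lines of each kind at a time and covers these six lines with three
entries, one for each pair of kinds. -/
lemma exists_cover_lines {ι : Type} [Fintype ι] [DecidableEq ι] [Nonempty ι] (L : ι → ι → ι)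
    (hL : IsLatin L) : ∀ (d : ℕ) (R K S : Finset ι), R.card ≤ d → K.card ≤ d → S.card ≤ d →
      ∃ E ⊆ lsEntries L, E.card ≤ (3 * d + 1) / 2 ∧ (∀ i ∈ R, ∃ e ∈ E, e.1 = i) ∧
        (∀ j ∈ K, ∃ e ∈ E, e.2.1 = j) ∧ (∀ s ∈ S, ∃ e ∈ E, e.2.2 = s) := by
  intro d
  induction d using Nat.twoStepInduction with
  | zero =>
    intro R K S hR hK hS
    simp only [Nat.le_zero, Finset.card_eq_zero] at hR hK hS
    subst hR hK hS
    exact ⟨∅, by simp⟩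
  | one =>
    intro R K S hR hK hS
    obtain ⟨r, R', hR, hR'⟩ := exists_subset_insert R 0 hR
    obtain ⟨c, K', hK, hK'⟩ := exists_subset_insert K 0 hK
    obtain ⟨s, S', hS, hS'⟩ := exists_subset_insert S 0 hS
    simp only [Nat.le_zero, Finset.card_eq_zero] at hR' hK' hS'
    subst hR' hK' hS'
    obtain ⟨j, hj⟩ := (hL.1 r).2 s
    refine ⟨{(r, c, L r c), (r, j, L r j)}, ?_, Finset.card_le_two, ?_, ?_, ?_⟩
    · intro e he
      simp only [Finset.mem_insert, Finset.mem_singleton] at he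
      rcases he with rfl | rfl <;> exact mem_lsEntries_s5 ..
    · intro i hi
      have := hR hi
      simp_all
    · intro i hi
      have := hK hi
      simp_all
    · intro i hi
      have := hS hi
      simp_all
  | more d ih _ =>
    intro R K S hR hK hS
    obtain ⟨r₁, R₁, hR, hR₁⟩ := exists_subset_insert R (d + 1) hR
    obtain ⟨c₁, K₁, hK, hK₁⟩ := exists_subset_insert K (d + 1) hK
    obtain ⟨s₁, S₁, hS, hS₁⟩ := exists_subset_insert S (d + 1) hS
    obtain ⟨r₂, R₂, hR', hR₂⟩ := exists_subset_insert R₁ d hR₁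
    obtain ⟨c₂, K₂, hK', hK₂⟩ := exists_subset_insert K₁ d hK₁
    obtain ⟨s₂, S₂, hS', hS₂⟩ := exists_subset_insert S₁ d hS₁
    obtain ⟨E, hE, hc, h1, h2, h3⟩ := ih R₂ K₂ S₂ hR₂ hK₂ hS₂
    obtain ⟨j, hj⟩ := (hL.1 r₂).2 s₁
    obtain ⟨i, hi⟩ := (hL.2 c₂).2 s₂
    refine ⟨{(r₁, c₁, L r₁ c₁), (r₂, j, L r₂ j), (i, c₂, L i c₂)} ∪ E, ?_, ?_, ?_, ?_, ?_⟩
    · refine Finset.union_subset (fun e he => ?_) hE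
      simp only [Finset.mem_insert, Finset.mem_singleton] at he
      rcases he with rfl | rfl | rfl <;> exact mem_lsEntries_s5 ..
    · have := Finset.card_union_le {(r₁, c₁, L r₁ c₁), (r₂, j, L r₂ j), (i, c₂, L i c₂)} E
      have := Finset.card_le_three (a := (r₁, c₁, L r₁ c₁)) (b := (r₂, j, L r₂ j))
        (c := (i, c₂, L i c₂))
      omega
    · intro x hx
      rcases Finset.mem_insert.1 (hR hx) with rfl | hx
      · exact ⟨(x, c₁, L x c₁), by simp, rfl⟩
      rcases Finset.mem_insert.1 (hR' hx) with rfl | hx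
      · exact ⟨(x, j, L x j), by simp, rfl⟩
      obtain ⟨e, he, rfl⟩ := h1 x hx
      exact ⟨e, Finset.mem_union_right _ he, rfl⟩
    · intro x hx
      rcases Finset.mem_insert.1 (hK hx) with rfl | hx
      · exact ⟨(r₁, x, L r₁ x), by simp, rfl⟩
      rcases Finset.mem_insert.1 (hK' hx) with rfl | hx
      · exact ⟨(i, x, L i x), by simp, rfl⟩
      obtain ⟨e, he, rfl⟩ := h2 x hx
      exact ⟨e, Finset.mem_union_right _ he, rfl⟩
    · intro x hx
      rcases Finset.mem_insert.1 (hS hx) with rfl | hx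
      · exact ⟨(r₂, j, L r₂ j), by simp, hj⟩
      rcases Finset.mem_insert.1 (hS' hx) with rfl | hx
      · exact ⟨(i, c₂, L i c₂), by simp, hi⟩
      obtain ⟨e, he, rfl⟩ := h3 x hx
      exact ⟨e, Finset.mem_union_right _ he, rfl⟩

/-- Adding at most `⌈3 * d / 2⌉` entries to a partial transversal of deficit `d` gives a cover. -/
lemma IsPT.exists_cover {ι : Type} [Fintype ι] [DecidableEq ι] [Nonempty ι] {L : ι → ι → ι}
    (hL : IsLatin L) {T : Finset (ι × ι × ι)} (hT : IsPT L T) {d : ℕ}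
    (hd : T.card + d = Fintype.card ι) :
    ∃ C, IsLSCover L C ∧ C.card ≤ T.card + (3 * d + 1) / 2 := by
  have missed (g : ι × ι × ι → ι) (hg : ∀ e ∈ T, ∀ f ∈ T, e ≠ f → g e ≠ g f) :
      (T.image g)ᶜ.card ≤ d := by
    rw [Finset.card_compl, Finset.card_image_of_injOn]
    · omega
    · intro e he f hf h
      by_contra hne
      exact hg e he f hf hne h
  obtain ⟨E, hE, hc, h1, h2, h3⟩ := exists_cover_lines L hL d _ _ _
    (missed (fun e => e.1) fun e he f hf h => (hT.2 e he f hf h).1)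
    (missed (fun e => e.2.1) fun e he f hf h => (hT.2 e he f hf h).2.1)
    (missed (fun e => e.2.2) fun e he f hf h => (hT.2 e he f hf h).2.2)
  have covers (g : ι × ι × ι → ι) (h : ∀ i ∈ (T.image g)ᶜ, ∃ e ∈ E, g e = i) (i : ι) :
      ∃ e ∈ T ∪ E, g e = i := by
    by_cases hi : i ∈ T.image g
    · obtain ⟨e, he, rfl⟩ := Finset.mem_image.1 hi
      exact ⟨e, Finset.mem_union_left _ he, rfl⟩
    · obtain ⟨e, he, rfl⟩ := h i (Finset.mem_compl.2 hi)
      exact ⟨e, Finset.mem_union_right _ he, rfl⟩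
  refine ⟨T ∪ E, ⟨Finset.union_subset hT.1 hE, covers _ h1, covers _ h2, covers _ h3⟩, ?_⟩
  have := Finset.card_union_le T E
  omega

/-- A set of representatives for the fibres of a map `g` that is surjective on `C`. -/
lemma exists_reps {α ι : Type} [DecidableEq α] [Fintype ι] (C : Finset α) (g : α → ι)
    (h : ∀ i, ∃ e ∈ C, g e = i) :
    ∃ R ⊆ C, R.card = Fintype.card ι ∧ ∀ e ∈ R, ∀ f ∈ R, g e = g f → e = f := by
  choose r hr hg using h
  refine ⟨Finset.univ.image r, ?_, ?_, ?_⟩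
  · intro e he
    obtain ⟨i, -, rfl⟩ := Finset.mem_image.1 he
    exact hr i
  · rw [Finset.card_image_of_injective _ (Function.LeftInverse.injective hg), Finset.card_univ]
  · intro e he f hf h
    obtain ⟨i, -, rfl⟩ := Finset.mem_image.1 he
    obtain ⟨j, -, rfl⟩ := Finset.mem_image.1 hf
    rw [hg, hg] at h
    rw [h]

/-- Intersecting representative sets for rows, columns and symbols discards at most `|C| - n`
entries for each kind of line, leaving at least `|C| - 3 * (|C| - n)`. -/
lemma IsLSCover.exists_pt {ι : Type} [Fintype ι] [DecidableEq ι] {L : ι → ι → ι}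
    {C : Finset (ι × ι × ι)} (hC : IsLSCover L C) :
    ∃ T ⊆ C, IsPT L T ∧ 3 * Fintype.card ι ≤ T.card + 2 * C.card := by
  obtain ⟨R, hR, hRc, hR'⟩ := exists_reps C (fun e => e.1) hC.2.1
  obtain ⟨K, hK, hKc, hK'⟩ := exists_reps C (fun e => e.2.1) hC.2.2.1
  obtain ⟨S, hS, hSc, hS'⟩ := exists_reps C (fun e => e.2.2) hC.2.2.2
  refine ⟨R ∩ K ∩ S, fun e he => hS (Finset.mem_inter.1 he).2,
    ⟨fun e he => hC.1 (hS (Finset.mem_inter.1 he).2), ?_⟩, ?_⟩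
  · intro e he f hf hne
    simp only [Finset.mem_inter] at he hf
    exact ⟨fun h => hne (hR' e he.1.1 f hf.1.1 h), fun h => hne (hK' e he.1.2 f hf.1.2 h),
      fun h => hne (hS' e he.2 f hf.2 h)⟩
  · have h1 := Finset.card_union_add_card_inter R K
    have h2 := Finset.card_union_add_card_inter (R ∩ K) S
    have h3 := Finset.card_le_card (Finset.union_subset hR hK)
    have h4 := Finset.card_le_card
      (Finset.union_subset (Finset.inter_subset_left.trans hR : R ∩ K ⊆ C) hS)
    omega

lemma IsPT.mono {ι : Type} [Fintype ι] [DecidableEq ι] {L : ι → ι → ι}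
    {T T' : Finset (ι × ι × ι)} (hT : IsPT L T) (h : T' ⊆ T) : IsPT L T' :=
  ⟨h.trans hT.1, fun e he f hf => hT.2 e (h he) f (h hf)⟩

/-- If the minimum deficit of a partial transversal of a Latin square of order `n ≥ 2`
is `d`, then every minimum cover contains a partial transversal of deficit `d` if `d`
is even, and one of deficit `d + 1` if `d` is odd. -/
theorem stmt5 {n : ℕ} (hn : 2 ≤ n) (L : Fin n → Fin n → Fin n) (hL : IsLatin L)
    (d : ℕ)
    (hd : IsLeast {d' : ℕ | ∃ T : Finset (Fin n × Fin n × Fin n),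
      IsPT L T ∧ T.card + d' = n} d)
    (C : Finset (Fin n × Fin n × Fin n)) (hC : IsLSCover L C)
    (hmin : ∀ C' : Finset (Fin n × Fin n × Fin n), IsLSCover L C' → C.card ≤ C'.card) :
    (Even d → ∃ T : Finset (Fin n × Fin n × Fin n),
        T ⊆ C ∧ IsPT L T ∧ T.card + d = n) ∧
    (Odd d → ∃ T : Finset (Fin n × Fin n × Fin n),
        T ⊆ C ∧ IsPT L T ∧ T.card + (d + 1) = n) := by
  have : NeZero n := ⟨by omega⟩
  obtain ⟨T₀, hT₀, hc₀⟩ := hd.1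
  -- A single entry is a partial transversal, so `d < n`; this matters for the deficit `d + 1`.
  have hdn : d ≤ n - 1 := hd.2 ⟨{(0, 0, L 0 0)}, ⟨by simp [mem_lsEntries_s5], by simp⟩, by
    rw [Finset.card_singleton]
    omega⟩
  obtain ⟨C', hC', hc'⟩ := hT₀.exists_cover hL (d := d) (by simpa using hc₀)
  obtain ⟨T, hTC, hT, hc⟩ := hC.exists_pt
  rw [Fintype.card_fin] at hc
  have hle := hmin C' hC'
  have shrink (k : ℕ) (hk : k ≤ n) (h : n - k ≤ T.card) :
      ∃ T' : Finset (Fin n × Fin n × Fin n), T' ⊆ C ∧ IsPT L T' ∧ T'.card + k = n := by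
    obtain ⟨T', hT', hcard⟩ := Finset.exists_subset_card_eq h
    exact ⟨T', hT'.trans hTC, hT.mono hT', by omega⟩
  constructor
  · rintro ⟨m, hm⟩
    exact shrink d (by omega) (by omega)
  · rintro ⟨m, hm⟩
    exact shrink (d + 1) (by omega) (by omega)
end

section
/- Let T be a maximal partial transversal of deficit d ≥ 3 in a Latin square L of order n ≥ 3. Then T is not contained in any cover of L of size n + 1. -/
/-- If the values of `f` on `C` exhaust `ι`, at least `|ι| - |T|` elements of `C \ T` take a value
that `f` does not take on `T`. Applied with `f` the row, column or symbol of an entry. -/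
lemma card_le_card_add_missed {α ι : Type} [DecidableEq α] [Fintype ι] [DecidableEq ι]
    (f : α → ι) (T C : Finset α) (hC : ∀ i, ∃ e ∈ C, f e = i) :
    Fintype.card ι ≤ T.card + ((C \ T).filter fun e => f e ∉ T.image f).card := by
  have h : (Finset.univ : Finset ι) ⊆
      T.image f ∪ ((C \ T).filter fun e => f e ∉ T.image f).image f := by
    intro i _
    by_cases hi : i ∈ T.image f
    · exact Finset.mem_union_left _ hi
    · obtain ⟨e, he, rfl⟩ := hC i
      refine Finset.mem_union_right _ (Finset.mem_image_of_mem f ?_)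
      exact Finset.mem_filter.2
        ⟨Finset.mem_sdiff.2 ⟨he, fun h => hi (Finset.mem_image_of_mem f h)⟩, hi⟩
  calc Fintype.card ι = (Finset.univ : Finset ι).card := rfl
    _ ≤ _ := Finset.card_le_card h
    _ ≤ _ := Finset.card_union_le _ _
    _ ≤ _ := Nat.add_le_add Finset.card_image_le Finset.card_image_le

lemma not_all_missed {ι : Type} [Fintype ι] [DecidableEq ι] {L : ι → ι → ι}
    {T : Finset (ι × ι × ι)} (hT : IsMaximalPT L T) {e : ι × ι × ι} (he : e ∈ lsEntries L)
    (h1 : e.1 ∉ T.image fun e => e.1) (h2 : e.2.1 ∉ T.image fun e => e.2.1)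
    (h3 : e.2.2 ∉ T.image fun e => e.2.2) : False := by
  have m1 : ∀ f ∈ T, f.1 ≠ e.1 := fun f hf h => h1 (Finset.mem_image.2 ⟨f, hf, h⟩)
  have m2 : ∀ f ∈ T, f.2.1 ≠ e.2.1 := fun f hf h => h2 (Finset.mem_image.2 ⟨f, hf, h⟩)
  have m3 : ∀ f ∈ T, f.2.2 ≠ e.2.2 := fun f hf h => h3 (Finset.mem_image.2 ⟨f, hf, h⟩)
  refine hT.2 e he (fun h => m1 e h rfl) ⟨Finset.insert_subset he hT.1.1, ?_⟩
  intro a ha b hb hab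
  rcases Finset.mem_insert.1 ha with rfl | haT
  · rcases Finset.mem_insert.1 hb with rfl | hbT
    · exact absurd rfl hab
    · exact ⟨(m1 b hbT).symm, (m2 b hbT).symm, (m3 b hbT).symm⟩
  · rcases Finset.mem_insert.1 hb with rfl | hbT
    · exact ⟨m1 a haT, m2 a haT, m3 a haT⟩
    · exact hT.1.2 a haT b hbT hab

/-- A maximal partial transversal of deficit `d ≥ 3` in a Latin square of order
`n ≥ 3` is not contained in any cover of size `n + 1`. -/
theorem stmt10 {n : ℕ} (hn : 3 ≤ n) (L : Fin n → Fin n → Fin n) (hL : IsLatin L)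
    (T : Finset (Fin n × Fin n × Fin n)) (d : ℕ) (hd : 3 ≤ d)
    (hT : IsMaximalPT L T) (hTcard : T.card + d = n) :
    ¬ ∃ C : Finset (Fin n × Fin n × Fin n),
        IsLSCover L C ∧ C.card = n + 1 ∧ T ⊆ C := by
  rintro ⟨C, ⟨hCE, hR, hK, hS⟩, hCcard, hTC⟩
  have c1 := card_le_card_add_missed (fun e : Fin n × Fin n × Fin n => e.1) T C hR
  have c2 := card_le_card_add_missed (fun e : Fin n × Fin n × Fin n => e.2.1) T C hK
  have c3 := card_le_card_add_missed (fun e : Fin n × Fin n × Fin n => e.2.2) T C hS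
  have hD : (C \ T).card + T.card = C.card := Finset.card_sdiff_add_card_eq_card hTC
  -- Each entry of `C \ T` contributes at most two to the total number of missed lines represented.
  have key : ((C \ T).filter fun e => e.1 ∉ T.image fun e => e.1).card
      + ((C \ T).filter fun e => e.2.1 ∉ T.image fun e => e.2.1).card
      + ((C \ T).filter fun e => e.2.2 ∉ T.image fun e => e.2.2).card ≤ (C \ T).card * 2 := by
    rw [Finset.card_filter, Finset.card_filter, Finset.card_filter, ← Finset.sum_add_distrib,
      ← Finset.sum_add_distrib]
    refine Finset.sum_le_card_nsmul _ _ 2 fun e he => ?_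
    have hm := not_all_missed hT (hCE (Finset.mem_sdiff.1 he).1)
    split_ifs <;> first | omega | exact (hm ‹_› ‹_› ‹_›).elim
  rw [Fintype.card_fin] at c1 c2 c3
  omega
end

section
/- Let L be a Latin square of order n ≥ 3. Let p be the number of partial transversals of deficit 1 of L, let q be the number of covers of L of size n + 1, and let t be the number of transversals of L. Then (3n − 6)·p ≤ 2q + n(n − 4)·t. -/
open Finset

namespace LatinCover

/-- A Latin square of order `n` seen symmetrically: a set `E` of entries with three coordinate
functions (row, column, symbol) such that any two coordinates may be prescribed freely and then
determine the entry. -/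
structure IsNet {α : Type} {n : ℕ} (E : Finset α) (f : Fin 3 → α → Fin n) : Prop where
  inj : ∀ k l, k ≠ l → ∀ x ∈ E, ∀ y ∈ E, f k x = f k y → f l x = f l y → x = y
  surj : ∀ k l, k ≠ l → ∀ a b, ∃ x ∈ E, f k x = a ∧ f l x = b

/-- Partial transversals with `m` entries. -/
noncomputable def PTs {α : Type} {n : ℕ} (E : Finset α) (f : Fin 3 → α → Fin n) (m : ℕ) :
    Finset (Finset α) :=
  open Classical in {T ∈ E.powerset | (∀ k, Set.InjOn (f k) T) ∧ #T = m}

/-- Covers with `m` entries. -/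
noncomputable def Covs {α : Type} {n : ℕ} (E : Finset α) (f : Fin 3 → α → Fin n) (m : ℕ) :
    Finset (Finset α) :=
  open Classical in {C ∈ E.powerset | (∀ k a, ∃ x ∈ C, f k x = a) ∧ #C = m}

/-- Partial transversals of deficit `1` that do not extend to a transversal. -/
noncomputable def MaxPTs {α : Type} {n : ℕ} (E : Finset α) (f : Fin 3 → α → Fin n) :
    Finset (Finset α) :=
  open Classical in {T ∈ PTs E f (n - 1) | ∀ U ∈ PTs E f n, ¬ T ⊆ U}

/-- Covers of size `n + 1` that contain no transversal. -/
noncomputable def FreeCovs {α : Type} {n : ℕ} (E : Finset α) (f : Fin 3 → α → Fin n) :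
    Finset (Finset α) :=
  open Classical in {C ∈ Covs E f (n + 1) | ∀ U ∈ PTs E f n, ¬ U ⊆ C}

/-- The partial transversals of deficit `1` contained in `C`. -/
noncomputable def sub {α : Type} {n : ℕ} (E : Finset α) (f : Fin 3 → α → Fin n)
    (C : Finset α) : Finset (Finset α) :=
  open Classical in {T ∈ PTs E f (n - 1) | T ⊆ C}

section
variable {α : Type} {n : ℕ} {E : Finset α} {f : Fin 3 → α → Fin n}

lemma mem_PTs {m : ℕ} {T : Finset α} :
    T ∈ PTs E f m ↔ T ⊆ E ∧ (∀ k, Set.InjOn (f k) T) ∧ #T = m := by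
  simp [PTs]

lemma mem_Covs {m : ℕ} {C : Finset α} :
    C ∈ Covs E f m ↔ C ⊆ E ∧ (∀ k a, ∃ x ∈ C, f k x = a) ∧ #C = m := by
  simp [Covs]

lemma mem_MaxPTs {T : Finset α} :
    T ∈ MaxPTs E f ↔ T ∈ PTs E f (n - 1) ∧ ∀ U ∈ PTs E f n, ¬ T ⊆ U := by
  simp [MaxPTs]

lemma mem_FreeCovs {C : Finset α} :
    C ∈ FreeCovs E f ↔ C ∈ Covs E f (n + 1) ∧ ∀ U ∈ PTs E f n, ¬ U ⊆ C := by
  simp [FreeCovs]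

lemma mem_sub {C T : Finset α} : T ∈ sub E f C ↔ T ∈ PTs E f (n - 1) ∧ T ⊆ C := by
  simp [sub]

/-- `x` and `y` are distinct entries of `C` on a common line of kind `k`. -/
def Conf (f : Fin 3 → α → Fin n) (C : Finset α) (k : Fin 3) (x y : α) : Prop :=
  x ∈ C ∧ y ∈ C ∧ x ≠ y ∧ f k x = f k y

lemma Conf.symm {C : Finset α} {k : Fin 3} {x y : α} (h : Conf f C k x y) : Conf f C k y x :=
  ⟨h.2.1, h.1, h.2.2.1.symm, h.2.2.2.symm⟩

/-! ### Transversals and the covers that contain them -/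

/-- A transversal meets every line. -/
lemma exists_of_transversal {U : Finset α} (hU : U ∈ PTs E f n) (k : Fin 3) (a : Fin n) :
    ∃ x ∈ U, f k x = a := by
  obtain ⟨-, hi, hc⟩ := mem_PTs.1 hU
  have h : U.image (f k) = univ := by
    apply eq_univ_of_card
    rw [card_image_of_injOn (hi k), hc, Fintype.card_fin]
  have := h ▸ mem_univ a
  simpa using this

/-- A set of `n` entries that meets every line is a transversal. -/
lemma transversal_of_cover {U : Finset α} (hUE : U ⊆ E) (hc : #U = n)
    (h : ∀ k a, ∃ x ∈ U, f k x = a) : U ∈ PTs E f n := by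
  refine mem_PTs.2 ⟨hUE, fun k => ?_, hc⟩
  apply injOn_of_card_image_eq
  have : U.image (f k) = univ := by
    ext a; simpa using h k a
  rw [this, card_univ, Fintype.card_fin, hc]

variable [DecidableEq α]

/-- If a partial transversal of deficit `1` lies in a transversal plus one entry `e`, then it
lies in the transversal: keeping a new entry `e` would force out the three entries of the
transversal sharing a line with `e`, which is one too many. -/
lemma subset_of_subset_insert (hE : IsNet E f) (hn : 3 ≤ n) {T U : Finset α} {e : α}
    (hT : T ∈ PTs E f (n - 1)) (hU : U ∈ PTs E f n) (he : e ∈ E) (h : T ⊆ insert e U) :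
    T ⊆ U := by
  by_cases heU : e ∈ U
  · rwa [insert_eq_of_mem heU] at h
  by_cases heT : e ∈ T
  swap
  · exact (subset_insert_iff_of_notMem heT).1 h
  exfalso
  choose g hg hfg using fun k => exists_of_transversal hU k (f k e)
  obtain ⟨hUE, -, hUc⟩ := mem_PTs.1 hU
  obtain ⟨-, hTi, hTc⟩ := mem_PTs.1 hT
  have hge : ∀ k, g k ≠ e := fun k hk => heU (hk ▸ hg k)
  have hgi : Function.Injective g := by
    intro k l hkl
    by_contra hne
    exact hge k (hE.inj k l hne _ (hUE (hg k)) _ he (hfg k) (by rw [hkl, hfg l]))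
  have hgT : ∀ k, g k ∉ T := fun k hk => hge k (hTi k hk heT (hfg k))
  have hsub : T ⊆ insert e U \ univ.image g := by
    intro x hx
    refine mem_sdiff.2 ⟨h hx, ?_⟩
    simp only [mem_image, mem_univ, true_and, not_exists]
    rintro k rfl
    exact hgT k hx
  have h1 := card_le_card hsub
  rw [card_sdiff_of_subset, card_insert_of_notMem heU, card_image_of_injective _ hgi] at h1
  · simp at h1; omega
  · intro x hx
    obtain ⟨k, -, rfl⟩ := mem_image.1 hx
    exact mem_insert_of_mem (hg k)

/-- A transversal plus one entry contains only one transversal. -/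
lemma transversal_unique (hE : IsNet E f) (hn : 3 ≤ n) {U V : Finset α} {e : α}
    (hU : U ∈ PTs E f n) (hV : V ∈ PTs E f n) (he : e ∈ E) (h : V ⊆ insert e U) : V = U := by
  obtain ⟨hVE, hVi, hVc⟩ := mem_PTs.1 hV
  obtain ⟨hUE, hUi, hUc⟩ := mem_PTs.1 hU
  -- removing any one entry of `V` leaves a subset of `U`
  have key : ∀ v ∈ V, V.erase v ⊆ U := fun v hv =>
    subset_of_subset_insert hE hn
      (mem_PTs.2 ⟨(erase_subset _ _).trans hVE,
        fun k => (hVi k).mono (by exact_mod_cast erase_subset v V),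
        by rw [card_erase_of_mem hv, hVc]⟩) hU he ((erase_subset _ _).trans h)
  refine eq_of_subset_of_card_le (fun x hx => ?_) (by omega)
  obtain ⟨y, hy, hxy⟩ := exists_mem_ne (by omega : 1 < #V) x
  exact key y hy (mem_erase.2 ⟨hxy.symm, hx⟩)

/-- Covers of size `n + 1` containing a transversal arise by adding any of the `n² - n` other
entries to a transversal, without repetition. -/
lemma card_covs_ge (hE : IsNet E f) (hn : 3 ≤ n) (hEc : #E = n * n) :
    #(FreeCovs E f) + #(PTs E f n) * (n * n - n) ≤ #(Covs E f (n + 1)) := by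
  set S : Finset ((_ : Finset α) × α) := (PTs E f n).sigma (fun U => E \ U) with hS
  have hSc : #S = #(PTs E f n) * (n * n - n) := by
    rw [hS, card_sigma]
    apply sum_const_nat
    intro U hU
    obtain ⟨hUE, -, hUc⟩ := mem_PTs.1 hU
    rw [card_sdiff_of_subset hUE, hEc, hUc]
  have hmem : ∀ s ∈ S, s.1 ∈ PTs E f n ∧ s.2 ∈ E ∧ s.2 ∉ s.1 := by
    intro s hs
    simpa [hS] using hs
  have hinj : Set.InjOn (fun s : (_ : Finset α) × α => insert s.2 s.1) S := by
    rintro ⟨U, e⟩ h1 ⟨V, e'⟩ h2 h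
    obtain ⟨hU, he, heU⟩ := hmem _ h1
    obtain ⟨hV, he', heV⟩ := hmem _ h2
    simp only at h hU hV he he' heU heV
    obtain rfl : V = U := transversal_unique hE hn hU hV he (h ▸ subset_insert _ _)
    obtain rfl : e = e' := by
      have : e ∈ insert e' V := h ▸ mem_insert_self _ _
      exact (mem_insert.1 this).resolve_right heU
    rfl
  rw [← hSc, ← card_image_of_injOn hinj, ← card_union_of_disjoint]
  · apply card_le_card
    intro C hC
    rcases mem_union.1 hC with hC | hC
    · exact (mem_FreeCovs.1 hC).1
    · obtain ⟨⟨U, e⟩, hs, rfl⟩ := mem_image.1 hC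
      obtain ⟨hU, he, heU⟩ := hmem _ hs
      simp only at hU he heU
      obtain ⟨hUE, -, hUc⟩ := mem_PTs.1 hU
      refine mem_Covs.2 ⟨insert_subset he hUE, fun k a => ?_, ?_⟩
      · obtain ⟨x, hx, hxa⟩ := exists_of_transversal hU k a
        exact ⟨x, mem_insert_of_mem hx, hxa⟩
      · rw [card_insert_of_notMem heU, hUc]
  · rw [disjoint_right]
    intro C hC hC'
    obtain ⟨⟨U, e⟩, hs, rfl⟩ := mem_image.1 hC
    exact (mem_FreeCovs.1 hC').2 U (hmem _ hs).1 (subset_insert _ _)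

/-- Each transversal contains `n` partial transversals of deficit `1`. -/
lemma card_PTs_le (hn : 3 ≤ n) :
    #(PTs E f (n - 1)) ≤ #(MaxPTs E f) + n * #(PTs E f n) := by
  have hsub : PTs E f (n - 1) ⊆
      MaxPTs E f ∪ (PTs E f n).biUnion (fun U => U.powersetCard (n - 1)) := by
    intro T hT
    by_cases h : ∃ U ∈ PTs E f n, T ⊆ U
    · obtain ⟨U, hU, hTU⟩ := h
      exact mem_union_right _ (mem_biUnion.2
        ⟨U, hU, mem_powersetCard.2 ⟨hTU, (mem_PTs.1 hT).2.2⟩⟩)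
    · push Not at h
      exact mem_union_left _ (mem_MaxPTs.2 ⟨hT, h⟩)
  refine (card_le_card hsub).trans ((card_union_le _ _).trans ?_)
  gcongr
  rw [mul_comm]
  apply card_biUnion_le_card_mul
  intro U hU
  rw [card_powersetCard, (mem_PTs.1 hU).2.2, Nat.choose_symm (by omega : 1 ≤ n),
    Nat.choose_one_right]

/-! ### Partial transversals inside a cover of size `n + 1` -/

/-- A partial transversal omits an entry of each conflict. -/
lemma Conf.hit {C T : Finset α} {k : Fin 3} {x y : α} (h : Conf f C k x y)
    (hT : T ∈ sub E f C) : x ∈ C \ T ∨ y ∈ C \ T := by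
  by_contra! hh
  have hx : x ∈ T := by by_contra hx; exact hh.1 (mem_sdiff.2 ⟨h.1, hx⟩)
  have hy : y ∈ T := by by_contra hy; exact hh.2 (mem_sdiff.2 ⟨h.2.1, hy⟩)
  exact h.2.2.1 ((mem_PTs.1 (mem_sub.1 hT).1).2.1 k hx hy h.2.2.2)

lemma card_sdiff_sub {C T : Finset α} (hn : 3 ≤ n) (hC : #C = n + 1) (hT : T ∈ sub E f C) :
    #(C \ T) = 2 := by
  obtain ⟨h1, h2⟩ := mem_sub.1 hT
  rw [card_sdiff_of_subset h2, (mem_PTs.1 h1).2.2, hC]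
  omega

lemma card_sub_le_of_sdiff {C : Finset α} {S : Finset (Finset α)}
    (h : ∀ T ∈ sub E f C, C \ T ∈ S) : #(sub E f C) ≤ #S := by
  apply card_le_card_of_injOn (fun T => C \ T) h
  intro T hT U hU hTU
  have h1 := (mem_sub.1 hT).2
  have h2 := (mem_sub.1 hU).2
  simp only at hTU
  rw [← Finset.sdiff_sdiff_eq_self h1, hTU, Finset.sdiff_sdiff_eq_self h2]

lemma eq_pair_of_card_two {D : Finset α} (hD : #D = 2) {x y : α} (hx : x ∈ D)
    (hy : y ∈ D) (hxy : x ≠ y) : D = {x, y} := by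
  symm
  apply eq_of_subset_of_card_le
  · intro z hz
    rcases mem_insert.1 hz with rfl | hz
    · exact hx
    · rwa [mem_singleton.1 hz]
  · rw [hD, card_pair hxy]

/-- When two conflicts share an entry `m` that is not in the third conflict `{c, d}`, the removed
pair is `{m, c}`, `{m, d}` or the pair `{a, b}` of outer entries. -/
lemma sdiff_cases {C T : Finset α} (hn : 3 ≤ n) (hC : #C = n + 1) {k l j : Fin 3}
    {m a b c d : α} (h1 : Conf f C k m a) (h2 : Conf f C l m b) (h3 : Conf f C j c d)
    (hab : a ≠ b) (hmc : m ≠ c) (hmd : m ≠ d) (hT : T ∈ sub E f C) :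
    C \ T = {m, c} ∨ C \ T = {m, d} ∨ C \ T = {a, b} := by
  have hD := card_sdiff_sub hn hC hT
  by_cases hm : m ∈ C \ T
  · rcases h3.hit hT with h | h
    · exact Or.inl (eq_pair_of_card_two hD hm h hmc)
    · exact Or.inr (Or.inl (eq_pair_of_card_two hD hm h hmd))
  · exact Or.inr (Or.inr (eq_pair_of_card_two hD ((h1.hit hT).resolve_left hm)
      ((h2.hit hT).resolve_left hm) hab))

/-- The conflict graph is a path with two edges plus a disjoint edge. -/
lemma card_sub_le_two {C : Finset α} (hn : 3 ≤ n) (hC : #C = n + 1) {k l j : Fin 3}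
    {m a b c d : α} (h1 : Conf f C k m a) (h2 : Conf f C l m b) (h3 : Conf f C j c d)
    (hab : a ≠ b) (hmc : m ≠ c) (hmd : m ≠ d) (hac : a ≠ c) (had : a ≠ d) (hbc : b ≠ c)
    (hbd : b ≠ d) : #(sub E f C) ≤ 2 := by
  refine (card_sub_le_of_sdiff (S := {{m, c}, {m, d}}) fun T hT => ?_).trans card_le_two
  rcases sdiff_cases hn hC h1 h2 h3 hab hmc hmd hT with h | h | h
  · simp [h]
  · simp [h]
  · exfalso
    have := h3.hit hT
    rw [h] at this
    simp only [mem_insert, mem_singleton] at this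
    tauto

/-- In a cover of size `n + 1` without transversals, the three conflicts have no common entry:
removing it would leave a cover of size `n`. -/
lemma no_star {C : Finset α} (hC : C ∈ FreeCovs E f) {m : α}
    (h : ∀ k, ∃ x, Conf f C k m x) : False := by
  obtain ⟨hC, hfree⟩ := mem_FreeCovs.1 hC
  obtain ⟨hCE, hcov, hcard⟩ := mem_Covs.1 hC
  have hm : m ∈ C := (h 0).choose_spec.1
  refine hfree (C.erase m) (transversal_of_cover ((erase_subset _ _).trans hCE) ?_ ?_)
    (erase_subset _ _)
  · rw [card_erase_of_mem hm, hcard]; rfl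
  · intro k a
    obtain ⟨x, hx, rfl⟩ := hcov k a
    by_cases hxm : x = m
    · subst hxm
      obtain ⟨y, hy⟩ := h k
      exact ⟨y, mem_erase.2 ⟨hy.2.2.1.symm, hy.2.1⟩, hy.2.2.2.symm⟩
    · exact ⟨x, mem_erase.2 ⟨hxm, hx⟩, rfl⟩

lemma card_sub_le_three (hE : IsNet E f) (hn : 3 ≤ n) {C : Finset α} (hC : C ∈ FreeCovs E f) :
    #(sub E f C) ≤ 3 := by
  obtain ⟨hCE, hcov, hcard⟩ := mem_Covs.1 (mem_FreeCovs.1 hC).1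
  have hconf : ∀ k, ∃ x y, Conf f C k x y := by
    intro k
    obtain ⟨x, hx, y, hy, hxy, h⟩ := exists_ne_map_eq_of_card_lt_of_maps_to
      (s := C) (t := univ) (f := f k) (by simp [hcard]) (fun _ _ => mem_coe.2 (mem_univ _))
    exact ⟨x, y, hx, hy, hxy, h⟩
  by_cases hmeet : ∃ k l m a b, k ≠ l ∧ Conf f C k m a ∧ Conf f C l m b
  · obtain ⟨k, l, m, a, b, hkl, h1, h2⟩ := hmeet
    obtain ⟨j, hj⟩ : ∃ j : Fin 3, ∀ i, i = k ∨ i = l ∨ i = j := by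
      clear h1 h2
      revert k l; decide
    have hstar : ∀ c, ¬ Conf f C j m c := by
      intro c hc
      refine no_star hC (m := m) fun i => ?_
      rcases hj i with rfl | rfl | rfl
      exacts [⟨a, h1⟩, ⟨b, h2⟩, ⟨c, hc⟩]
    obtain ⟨c, d, h3⟩ := hconf j
    have hab : a ≠ b := by
      rintro rfl
      exact h1.2.2.1 (hE.inj k l hkl _ (hCE h1.1) _ (hCE h1.2.1) h1.2.2.2 h2.2.2.2)
    have hmc : m ≠ c := by rintro rfl; exact hstar _ h3
    have hmd : m ≠ d := by rintro rfl; exact hstar _ h3.symm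
    refine (card_sub_le_of_sdiff (S := {{m, c}, {m, d}, {a, b}}) fun T hT => ?_).trans
      card_le_three
    rcases sdiff_cases hn hcard h1 h2 h3 hab hmc hmd hT with h | h | h <;> simp [h]
  · -- three disjoint conflicts cannot be resolved by removing two entries
    suffices sub E f C = ∅ by simp [this]
    by_contra hne
    obtain ⟨T, hT⟩ := nonempty_iff_ne_empty.2 hne
    have : ∀ k, ∃ u v, u ∈ C \ T ∧ Conf f C k u v := by
      intro k
      obtain ⟨x, y, h⟩ := hconf k
      rcases h.hit hT with hx | hy
      exacts [⟨x, y, hx, h⟩, ⟨y, x, hy, h.symm⟩]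
    choose u v hu huv using this
    have hinj : Function.Injective u := by
      intro k l hkl
      by_contra hne
      exact hmeet ⟨k, l, u k, v k, v l, hne, huv k, hkl ▸ huv l⟩
    have h1 : #(univ.image u) ≤ #(C \ T) := by
      apply card_le_card
      intro x hx
      obtain ⟨k, -, rfl⟩ := mem_image.1 hx
      exact hu k
    rw [card_image_of_injective _ hinj, card_sdiff_sub hn hcard hT] at h1
    simp at h1

/-! ### Weights and double counting -/

/-- The weight of a cover: `2` if it contains at least three partial transversals of deficit `1`,
and `3` otherwise. -/
noncomputable def wt (E : Finset α) (f : Fin 3 → α → Fin n) (C : Finset α) : ℕ :=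
  if #(sub E f C) ≤ 2 then 3 else 2

lemma card_sub_mul_wt (hE : IsNet E f) (hn : 3 ≤ n) {C : Finset α} (hC : C ∈ FreeCovs E f) :
    #(sub E f C) * wt E f C ≤ 6 := by
  have := card_sub_le_three hE hn hC
  unfold wt
  split_ifs <;> omega

/-- A partial transversal of deficit `1` misses exactly one line of each kind. -/
lemma exists_missing {T : Finset α} (hn : 3 ≤ n) (hT : T ∈ PTs E f (n - 1)) (k : Fin 3) :
    ∃ r, (∀ x ∈ T, f k x ≠ r) ∧ ∀ a, a ≠ r → ∃ x ∈ T, f k x = a := by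
  obtain ⟨-, hi, hc⟩ := mem_PTs.1 hT
  have h : #(T.image (f k))ᶜ = 1 := by
    rw [card_compl, card_image_of_injOn (hi k), hc, Fintype.card_fin]; omega
  obtain ⟨r, hr⟩ := card_eq_one.1 h
  have key : ∀ a, a = r ↔ ∀ x ∈ T, f k x ≠ a := by
    intro a
    have := congrArg (a ∈ ·) hr
    simpa [eq_comm] using this.symm
  refine ⟨r, (key r).1 rfl, fun a ha => ?_⟩
  rw [Ne, key] at ha
  push Not at ha
  exact ha

/-- A maximal partial transversal `T` of deficit `1`, missing the lines `r k`, extends to `3n - 3`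
covers of size `n + 1`: take the entry `A k` on the two missing lines of kinds other than `k`, and
any entry `X` on the missing line of kind `k`. The index `(k, y)` stands for the entry `X` with
`y` as its coordinate of kind `k + 1`; `y ≠ r (k + 1)` excludes `X = A (k + 2)`, so that the
pairs `{A k, A l}` are counted once. For each `k`, all but three values of `y` give a conflict graph
consisting of a path with two edges and a disjoint edge. -/
lemma sum_wt_ge (hE : IsNet E f) (hn : 3 ≤ n) {T : Finset α} (hT : T ∈ MaxPTs E f) :
    9 * n - 18 ≤ ∑ C ∈ FreeCovs E f with T ⊆ C, wt E f C := by
  obtain ⟨hT, hmax⟩ := mem_MaxPTs.1 hT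
  obtain ⟨hTE, hTi, hTc⟩ := mem_PTs.1 hT
  choose r hr hrT using exists_missing hn hT
  have n01 : ∀ k : Fin 3, k ≠ k + 1 := by decide
  have n02 : ∀ k : Fin 3, k ≠ k + 2 := by decide
  have n12 : ∀ k : Fin 3, k + 1 ≠ k + 2 := by decide
  have cases3 : ∀ k i : Fin 3, i = k ∨ i = k + 1 ∨ i = k + 2 := by decide
  choose A hAE hA1 hA2 using fun k => hE.surj (k + 1) (k + 2) (n12 k) (r (k + 1)) (r (k + 2))
  choose X hXE hX0 hX1 using fun k y => hE.surj k (k + 1) (n01 k) (r k) y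
  have hAr : ∀ k l, l ≠ k → f l (A k) = r l := by
    intro k l hlk
    rcases cases3 k l with rfl | rfl | rfl
    exacts [absurd rfl hlk, hA1 k, hA2 k]
  -- maximality of `T`
  have hnofull : ∀ e ∈ E, ¬ ∀ k, f k e = r k := by
    intro e he h
    have heT : e ∉ T := fun heT => hr 0 e heT (h 0)
    refine hmax (insert e T) (transversal_of_cover (insert_subset he hTE) ?_ ?_)
      (subset_insert _ _)
    · rw [card_insert_of_notMem heT, hTc]; omega
    · intro k a
      by_cases ha : a = r k
      · exact ⟨e, mem_insert_self _ _, by rw [h, ha]⟩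
      · obtain ⟨x, hx, hxa⟩ := hrT k a ha
        exact ⟨x, mem_insert_of_mem hx, hxa⟩
  have hA0 : ∀ k, f k (A k) ≠ r k := by
    intro k h
    refine hnofull (A k) (hAE k) fun l => ?_
    by_cases hl : l = k
    · rw [hl, h]
    · exact hAr k l hl
  have hAinj : Function.Injective A := by
    intro k l h
    by_contra hne
    exact hA0 k (by rw [h]; exact hAr l k hne)
  have hAT : ∀ k, A k ∉ T := fun k h => hr _ _ h (hA1 k)
  have hXT : ∀ k y, X k y ∉ T := fun k y h => hr _ _ h (hX0 k y)
  have hXA : ∀ k y, X k y ≠ A k := fun k y h => hA0 k (h ▸ hX0 k y)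
  -- `X k y = A l` forces `l = k + 1` as soon as `y ≠ r (k + 1)`
  have hXA2 : ∀ k y l, y ≠ r (k + 1) → X k y = A l → l = k + 1 := by
    intro k y l hy h
    rcases cases3 k l with rfl | rfl | rfl
    · exact absurd h (hXA _ _)
    · rfl
    · exact absurd (by rw [← hX1 k y, h, hAr _ _ (n12 k)]) hy
  let J : Finset ((_ : Fin 3) × Fin n) := univ.sigma fun k => univ.erase (r (k + 1))
  let F : ((_ : Fin 3) × Fin n) → Finset α := fun s => insert (A s.1) (insert (X s.1 s.2) T)
  have hFinj : Set.InjOn F J := by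
    rintro ⟨k, y⟩ h1 ⟨l, z⟩ h2 h
    have hy : y ≠ r (k + 1) := by simpa [J] using h1
    have hz : z ≠ r (l + 1) := by simpa [J] using h2
    simp only [F] at h
    have e1 : A k = A l ∨ A k = X l z := by
      have : A k ∈ insert (A l) (insert (X l z) T) := h ▸ mem_insert_self _ _
      simpa [hAT k] using this
    have e2 : X k y = A l ∨ X k y = X l z := by
      have : X k y ∈ insert (A l) (insert (X l z) T) :=
        h ▸ mem_insert_of_mem (mem_insert_self _ _)
      simpa [hXT k y] using this
    have e3 : A l = A k ∨ A l = X k y := by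
      have : A l ∈ insert (A k) (insert (X k y) T) := h ▸ mem_insert_self _ _
      simpa [hAT l] using this
    by_cases hkl : k = l
    · subst hkl
      have h4 : X k y = X k z := e2.resolve_left (hXA k y)
      have : y = z := by rw [← hX1 k y, h4, hX1]
      rw [this]
    · exfalso
      have h5 := hXA2 l z k hz (e1.resolve_left fun h => hkl (hAinj h)).symm
      have h6 := hXA2 k y l hy (e3.resolve_left fun h => hkl (hAinj h).symm).symm
      have hcycle : ∀ k l : Fin 3, k = l + 1 → l = k + 1 → False := by decide
      exact hcycle k l h5 h6
  have hFcard : ∀ s, #(F s) = n + 1 := by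
    intro s
    have : A s.1 ∉ insert (X s.1 s.2) T := by
      simp [hAT, (hXA s.1 s.2).symm]
    simp only [F]
    rw [card_insert_of_notMem this, card_insert_of_notMem (hXT _ _), hTc]
    omega
  have hFfree : ∀ s, F s ∈ FreeCovs E f := by
    intro s
    have hFE : F s ⊆ E := insert_subset (hAE _) (insert_subset (hXE _ _) hTE)
    refine mem_FreeCovs.2 ⟨mem_Covs.2 ⟨hFE, fun k a => ?_, hFcard s⟩, fun U hU hUF => ?_⟩
    · by_cases ha : a = r k
      · by_cases hk : k = s.1
        · refine ⟨X s.1 s.2, by simp [F], ?_⟩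
          rw [ha, hk, hX0]
        · exact ⟨A s.1, by simp [F], by rw [ha, hAr _ _ hk]⟩
      · obtain ⟨x, hx, hxa⟩ := hrT k a ha
        exact ⟨x, by simp [F, hx], hxa⟩
    · -- a transversal inside would differ from the cover by one entry and then contain `T`
      have hUc := (mem_PTs.1 hU).2.2
      have h1 : #(F s \ U) = 1 := by
        rw [card_sdiff_of_subset hUF, hFcard, hUc]; omega
      obtain ⟨e, he⟩ := card_eq_one.1 h1
      have heF : e ∈ F s := (mem_sdiff.1 (he ▸ mem_singleton_self e)).1
      refine hmax U hU (subset_of_subset_insert hE hn hT hU (hFE heF) fun x hx => ?_)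
      by_cases hxU : x ∈ U
      · exact mem_insert_of_mem hxU
      · have : x ∈ F s \ U := mem_sdiff.2 ⟨by simp [F, hx], hxU⟩
        rw [he] at this
        rw [mem_singleton.1 this]
        exact mem_insert_self _ _
  -- the entry of `T` in conflict with `A k`
  choose t htT htA using fun k => hrT k _ (hA0 k)
  choose Y hYE hY0 hY2 using fun k =>
    hE.surj k (k + 2) (n02 k) (r k) (f (k + 2) (t k))
  let B : Fin 3 → Finset (Fin n) := fun k =>
    {f (k + 1) (A (k + 1)), f (k + 1) (t k), f (k + 1) (Y k)}
  have hgood : ∀ k y, y ≠ r (k + 1) → y ∉ B k → wt E f (F ⟨k, y⟩) = 3 := by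
    intro k y hy hyB
    simp only [B, mem_insert, mem_singleton, not_or] at hyB
    obtain ⟨hb1, hb2, hb3⟩ := hyB
    have hX2 : f (k + 2) (X k y) ≠ r (k + 2) := by
      intro h
      apply hb1
      have : X k y = A (k + 1) := hE.inj k (k + 2) (n02 k) _ (hXE _ _) _ (hAE _)
        (by rw [hX0, hAr _ _ (n01 k)]) (by rw [h, hAr _ _ (n12 k).symm])
      rw [← this, hX1]
    obtain ⟨a, haT, hax⟩ := hrT (k + 1) y hy
    obtain ⟨b, hbT, hbx⟩ := hrT (k + 2) _ hX2
    have hXa : X k y ≠ a := fun h => hXT k y (h ▸ haT)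
    have hXb : X k y ≠ b := fun h => hXT k y (h ▸ hbT)
    have hXF : X k y ∈ F ⟨k, y⟩ := by simp [F]
    have hAF : A k ∈ F ⟨k, y⟩ := by simp [F]
    have hTF : ∀ x ∈ T, x ∈ F ⟨k, y⟩ := fun x hx => by simp [F, hx]
    have hle : #(sub E f (F ⟨k, y⟩)) ≤ 2 := by
      apply card_sub_le_two (k := k + 1) (l := k + 2) (j := k) (m := X k y) (a := a) (b := b)
        (c := A k) (d := t k) hn (hFcard _)
      · exact ⟨hXF, hTF a haT, hXa, by rw [hX1, hax]⟩
      · exact ⟨hXF, hTF b hbT, hXb, hbx.symm⟩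
      · exact ⟨hAF, hTF _ (htT k), fun h => hAT k (h ▸ htT k), (htA k).symm⟩
      · rintro rfl
        exact hXa (hE.inj (k + 1) (k + 2) (n12 k) _ (hXE _ _) _ (hTE haT)
          (by rw [hX1, hax]) hbx.symm)
      · exact hXA k y
      · exact fun h => hXT k y (h ▸ htT k)
      · exact fun h => hAT k (h ▸ haT)
      · rintro rfl
        exact hb2 hax.symm
      · exact fun h => hAT k (h ▸ hbT)
      · rintro rfl
        apply hb3
        have : X k y = Y k := hE.inj k (k + 2) (n02 k) _ (hXE _ _) _ (hYE _)
          (by rw [hX0, hY0]) (by rw [hY2, hbx])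
        rw [← this, hX1]
    simp [wt, hle]
  have hwt2 : ∀ C, 2 ≤ wt E f C := by
    intro C; unfold wt; split_ifs <;> omega
  have hrow : ∀ k, 3 * n - 6 ≤ ∑ y ∈ univ.erase (r (k + 1)), wt E f (F ⟨k, y⟩) := by
    intro k
    have h1 : ∑ y ∈ univ.erase (r (k + 1)), (2 + if y ∉ B k then 1 else 0) ≤
        ∑ y ∈ univ.erase (r (k + 1)), wt E f (F ⟨k, y⟩) := by
      apply sum_le_sum
      intro y hy
      by_cases h : y ∈ B k
      · simpa [h] using hwt2 _
      · simp [h, hgood k y (mem_erase.1 hy).1 h]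
    refine le_trans ?_ h1
    rw [sum_add_distrib, sum_const, ← card_filter, smul_eq_mul, ← sdiff_eq_filter,
      card_erase_of_mem (mem_univ _), card_univ, Fintype.card_fin]
    have h2 := le_card_sdiff (B k) (univ.erase (r (k + 1)))
    rw [card_erase_of_mem (mem_univ _), card_univ, Fintype.card_fin] at h2
    have h3 : #(B k) ≤ 3 := card_le_three
    omega
  calc 9 * n - 18 = ∑ _k : Fin 3, (3 * n - 6) := by simp; omega
    _ ≤ ∑ k : Fin 3, ∑ y ∈ univ.erase (r (k + 1)), wt E f (F ⟨k, y⟩) :=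
        sum_le_sum fun k _ => hrow k
    _ = ∑ s ∈ J, wt E f (F s) := by rw [sum_sigma]
    _ = ∑ C ∈ J.image F, wt E f C := (sum_image hFinj).symm
    _ ≤ _ := by
        apply sum_le_sum_of_subset
        intro C hC
        obtain ⟨s, -, rfl⟩ := mem_image.1 hC
        refine mem_filter.2 ⟨hFfree s, fun x hx => by simp [F, hx]⟩

/-- Double counting of the pairs `T ⊆ C` with weight `wt C`. -/
lemma double_count (hE : IsNet E f) (hn : 3 ≤ n) :
    #(MaxPTs E f) * (9 * n - 18) ≤ #(FreeCovs E f) * 6 := by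
  calc #(MaxPTs E f) * (9 * n - 18) = ∑ _T ∈ MaxPTs E f, (9 * n - 18) := by simp
    _ ≤ ∑ T ∈ MaxPTs E f, ∑ C ∈ FreeCovs E f with T ⊆ C, wt E f C :=
        sum_le_sum fun T hT => sum_wt_ge hE hn hT
    _ = ∑ C ∈ FreeCovs E f, ∑ T ∈ MaxPTs E f with T ⊆ C, wt E f C := by
        simp only [sum_filter]
        exact sum_comm
    _ ≤ ∑ _C ∈ FreeCovs E f, 6 := by
        apply sum_le_sum
        intro C hC
        rw [sum_const, smul_eq_mul]
        refine le_trans (Nat.mul_le_mul_right _ (card_le_card fun T hT => ?_))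
          (card_sub_mul_wt hE hn hC)
        obtain ⟨h1, h2⟩ := mem_filter.1 hT
        exact mem_sub.2 ⟨(mem_MaxPTs.1 h1).1, h2⟩
    _ = _ := by simp

theorem net_ineq (hE : IsNet E f) (hn : 3 ≤ n) (hEc : #E = n * n) :
    ((3 : ℤ) * n - 6) * #(PTs E f (n - 1)) ≤
      2 * #(Covs E f (n + 1)) + (n : ℤ) * (n - 4) * #(PTs E f n) := by
  have h1 := double_count hE hn
  have h2 := card_covs_ge hE hn hEc
  have h3 := card_PTs_le (E := E) (f := f) hn
  have hnn : n ≤ n * n := Nat.le_mul_self n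
  zify [hnn, (by omega : 18 ≤ 9 * n)] at h1 h2 h3
  have h4 : (0 : ℤ) ≤ 3 * n - 6 := by omega
  have h5 := mul_le_mul_of_nonneg_left h3 h4
  linarith

end

/-! ### The net of a Latin square -/

/-- Row, column and symbol of an entry. -/
def coord (n : ℕ) : Fin 3 → Fin n × Fin n × Fin n → Fin n :=
  ![fun e => e.1, fun e => e.2.1, fun e => e.2.2]

section
variable {n : ℕ} {L : Fin n → Fin n → Fin n}

lemma mem_lsEntries {e : Fin n × Fin n × Fin n} : e ∈ lsEntries L ↔ L e.1 e.2.1 = e.2.2 := by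
  obtain ⟨i, j, s⟩ := e
  simp [lsEntries]

lemma isNet_of_isLatin (hL : IsLatin L) : IsNet (lsEntries L) (coord n) := by
  obtain ⟨hrow, hcol⟩ := hL
  constructor
  · rintro k l hkl ⟨i, j, s⟩ hx ⟨i', j', s'⟩ hy h1 h2
    simp only [mem_lsEntries] at hx hy
    subst hx hy
    have hr : ∀ i j j', L i j = L i j' → j = j' := fun i j j' h => (hrow i).1 h
    have hc : ∀ j i i', L i j = L i' j → i = i' := fun j i i' h => (hcol j).1 h
    fin_cases k <;> fin_cases l <;> simp [coord] at hkl h1 h2 <;> grind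
  · intro k l hkl a b
    obtain ⟨j, hj⟩ := (hrow a).2 b
    obtain ⟨j', hj'⟩ := (hrow b).2 a
    obtain ⟨i, hi⟩ := (hcol a).2 b
    obtain ⟨i', hi'⟩ := (hcol b).2 a
    simp only at hj hj' hi hi'
    fin_cases k <;> fin_cases l <;> simp [coord, mem_lsEntries] at hkl ⊢ <;> grind

lemma card_lsEntries : #(lsEntries L) = n * n := by
  rw [lsEntries, card_image_of_injective]
  · simp
  · rintro ⟨a, b⟩ ⟨c, d⟩ h
    simp at h
    simp [h.1, h.2.1]

lemma isPT_iff {T : Finset (Fin n × Fin n × Fin n)} :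
    IsPT L T ↔ T ⊆ lsEntries L ∧ ∀ k, Set.InjOn (coord n k) T := by
  simp only [IsPT, Fin.forall_fin_succ, Set.InjOn, coord]
  simp
  grind

lemma isLSCover_iff {C : Finset (Fin n × Fin n × Fin n)} :
    IsLSCover L C ↔ C ⊆ lsEntries L ∧ ∀ k a, ∃ x ∈ C, coord n k x = a := by
  simp only [IsLSCover, Fin.forall_fin_succ (n := 2), Fin.forall_fin_succ (n := 1),
    Fin.forall_fin_succ (n := 0), coord]
  simp

lemma ncard_PT (m : ℕ) :
    {T : Finset (Fin n × Fin n × Fin n) | IsPT L T ∧ #T = m}.ncard =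
      #(PTs (lsEntries L) (coord n) m) := by
  rw [← Set.ncard_coe_finset]
  congr 1
  ext T
  simp [mem_PTs, isPT_iff, and_assoc]

lemma ncard_cover (m : ℕ) :
    {C : Finset (Fin n × Fin n × Fin n) | IsLSCover L C ∧ #C = m}.ncard =
      #(Covs (lsEntries L) (coord n) m) := by
  rw [← Set.ncard_coe_finset]
  congr 1
  ext T
  simp [mem_Covs, isLSCover_iff, and_assoc]

end

end LatinCover

/-- If `p` is the number of partial transversals of deficit `1`, `q` the number of
`(n+1)`-covers and `t` the number of transversals of a Latin square of order `n ≥ 3`,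
then `(3n - 6)p ≤ 2q + n(n - 4)t`. -/
theorem stmt11 {n : ℕ} (hn : 3 ≤ n) (L : Fin n → Fin n → Fin n) (hL : IsLatin L) :
    ((3 : ℤ) * n - 6) *
        ({T : Finset (Fin n × Fin n × Fin n) | IsPT L T ∧ T.card + 1 = n}.ncard : ℤ) ≤
      2 * ({C : Finset (Fin n × Fin n × Fin n) |
          IsLSCover L C ∧ C.card = n + 1}.ncard : ℤ) +
        (n : ℤ) * ((n : ℤ) - 4) *
          ({T : Finset (Fin n × Fin n × Fin n) | IsPT L T ∧ T.card = n}.ncard : ℤ) := by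
  have h : ∀ T : Finset (Fin n × Fin n × Fin n), T.card + 1 = n ↔ T.card = n - 1 := by
    intro T; omega
  simp only [h]
  rw [LatinCover.ncard_PT, LatinCover.ncard_PT, LatinCover.ncard_cover]
  exact LatinCover.net_ineq (LatinCover.isNet_of_isLatin hL) hn LatinCover.card_lsEntries
end

section
/- Let G be a finite abelian group of order n and let L be its Cayley table, the Latin square of order n with L_{ij} = i + j. If the Sylow 2-subgroups of G are trivial or non-cyclic, then L has no maximal partial transversal of deficit 1. If the Sylow 2-subgroups of G are non-trivial and cyclic, then L has no transversal. -/
/-! ### The sum of all elements of a finite abelian group -/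

section TwoTorsion

variable {G : Type} [AddCommGroup G] [Fintype G] [DecidableEq G]

lemma sum_univ_eq_sum_two_torsion :
    ∑ g : G, g = ∑ g ∈ Finset.univ.filter (fun g : G => g + g = 0), g := by
  rw [← Finset.sum_filter_add_sum_filter_not Finset.univ (fun g : G => g + g = 0)]
  rw [add_eq_left]
  refine Finset.sum_involution (fun g _ => -g) ?_ ?_ ?_ ?_
  · intro a _; simp
  · intro a ha _ h
    simp only [Finset.mem_filter, Finset.mem_univ, true_and] at ha
    exact ha (by nth_rewrite 1 [← h]; simp)
  · intro a ha
    simp only [Finset.mem_filter, Finset.mem_univ, true_and] at ha ⊢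
    intro h
    apply ha
    rw [← neg_add, neg_eq_zero] at h
    exact h
  · intro a _; simp

/-- The subgroup `{0, a, b, a + b}` for `a` and `b` of order dividing two; it is a Klein four-group
when `a` and `b` are distinct and non-zero. -/
def kleinSubgroup (a b : G) (ha : a + a = 0) (hb : b + b = 0) : AddSubgroup G where
  carrier := {x | x = 0 ∨ x = a ∨ x = b ∨ x = a + b}
  zero_mem' := Or.inl rfl
  add_mem' := by
    rintro x y hx hy
    simp only [Set.mem_ofPred_eq] at *
    rcases hx with rfl | rfl | rfl | rfl <;> rcases hy with rfl | rfl | rfl | rfl <;> grind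
  neg_mem' := by
    rintro x hx
    simp only [Set.mem_ofPred_eq] at *
    rcases hx with rfl | rfl | rfl | rfl <;> grind

/-- With two distinct involutions, the 2-torsion is a union of cosets of a Klein four-group, and
each of these cosets sums to zero. -/
lemma sum_two_torsion_eq_zero (a b : G) (ha : a + a = 0) (hb : b + b = 0)
    (ha0 : a ≠ 0) (hb0 : b ≠ 0) (hab : a ≠ b) :
    ∑ g ∈ Finset.univ.filter (fun g : G => g + g = 0), g = 0 := by
  classical
  let K := kleinSubgroup a b ha hb
  rw [← Finset.sum_fiberwise _ (fun g : G => (QuotientAddGroup.mk g : G ⧸ K))]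
  refine Finset.sum_eq_zero fun q _ => ?_
  by_cases hq : ∃ v : G, v + v = 0 ∧ (QuotientAddGroup.mk v : G ⧸ K) = q
  · obtain ⟨v, hv, rfl⟩ := hq
    have hfib : (Finset.univ.filter (fun g : G => g + g = 0)).filter
        (fun g : G => (QuotientAddGroup.mk g : G ⧸ K) = QuotientAddGroup.mk v) =
        {v, v + a, v + b, v + (a + b)} := by
      ext w
      have hK : -w + v ∈ K ↔ (-w + v = 0 ∨ -w + v = a ∨ -w + v = b ∨ -w + v = a + b) := Iff.rfl
      simp only [Finset.mem_filter, Finset.mem_univ, true_and, QuotientAddGroup.eq, hK,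
        Finset.mem_insert, Finset.mem_singleton]
      constructor
      · rintro ⟨h, h1⟩
        rcases h1 with h1 | h1 | h1 | h1 <;> rw [neg_add_eq_iff_eq_add] at h1 <;> grind
      · rintro (rfl | rfl | rfl | rfl) <;> refine ⟨by grind, by grind⟩
    rw [hfib, Finset.sum_insert, Finset.sum_insert, Finset.sum_insert, Finset.sum_singleton]
    · grind
    all_goals simp only [Finset.mem_insert, Finset.mem_singleton]; grind
  · refine Finset.sum_eq_zero fun w hw => ?_
    simp only [Finset.mem_filter, Finset.mem_univ, true_and] at hw
    exact absurd ⟨w, hw⟩ hq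

end TwoTorsion

/-! ### Sylow 2-subgroups and involutions -/

/-- A finite abelian 2-group with at most one involution is cyclic: each fibre of squaring has at
most two elements, so induction on `n` bounds the number of solutions of `x ^ n = 1` by `n`. -/
lemma isCyclic_of_unique_involution {Q : Type} [CommGroup Q] [Finite Q] (hQ : IsPGroup 2 Q)
    (t : Q) (ht : ∀ x : Q, x * x = 1 → x = 1 ∨ x = t) : IsCyclic Q := by
  classical
  cases nonempty_fintype Q
  apply isCyclic_of_card_pow_eq_one_le
  intro n
  induction n using Nat.strong_induction_on with
  | _ n ih =>
  intro hn
  rcases Nat.even_or_odd' n with ⟨m, rfl | rfl⟩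
  · have h1 := Finset.card_le_mul_card_image
      (s := Finset.univ.filter (fun x : Q => x ^ (2 * m) = 1)) (f := fun x : Q => x ^ 2) 2 (by
        intro y hy
        obtain ⟨x, hx, rfl⟩ := Finset.mem_image.1 hy
        refine (Finset.card_le_card (t := {x, x * t}) ?_).trans Finset.card_le_two
        intro w hw
        simp only [Finset.mem_filter, Finset.mem_insert, Finset.mem_singleton] at hw ⊢
        have : (x⁻¹ * w) * (x⁻¹ * w) = 1 := by
          rw [← pow_two, mul_pow, hw.2, inv_pow, inv_mul_cancel]
        rcases ht _ this with h | h
        · left; exact (inv_mul_eq_one.1 h).symm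
        · right; exact inv_mul_eq_iff_eq_mul.1 h)
    have h2 : ((Finset.univ.filter (fun x : Q => x ^ (2 * m) = 1)).image
        (fun x : Q => x ^ 2)).card ≤ m := by
      refine (Finset.card_le_card ?_).trans (ih m (by omega) (by omega))
      intro y hy
      obtain ⟨x, hx, rfl⟩ := Finset.mem_image.1 hy
      simp only [Finset.mem_filter, Finset.mem_univ, true_and] at hx ⊢
      rw [← pow_mul]; exact hx
    omega
  · -- for odd `n`, the only solution in a 2-group is `1`
    refine (Finset.card_le_card (t := {1}) ?_).trans (by simp)
    intro x hx
    simp only [Finset.mem_filter, Finset.mem_univ, true_and, Finset.mem_singleton] at hx ⊢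
    obtain ⟨k, hk⟩ := hQ x
    have hcop : Nat.Coprime (2 * m + 1) (2 ^ k) :=
      Nat.Coprime.pow_right _ (Nat.coprime_two_right.2 ⟨m, rfl⟩)
    rw [← orderOf_eq_one_iff]
    exact Nat.eq_one_of_dvd_coprimes hcop (orderOf_dvd_of_pow_eq_one hx)
      (orderOf_dvd_of_pow_eq_one hk)

section Sylow

variable {G : Type} [AddCommGroup G] [Fintype G] [DecidableEq G]

lemma two_torsion_mem_sylow (P : Sylow 2 (Multiplicative G)) (a : G) (ha : a + a = 0) :
    Multiplicative.ofAdd a ∈ (P : Subgroup (Multiplicative G)) := by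
  have hp : IsPGroup 2 (Subgroup.zpowers (Multiplicative.ofAdd a)) := by
    rintro ⟨x, hx⟩
    obtain ⟨k, rfl⟩ := Subgroup.mem_zpowers_iff.1 hx
    refine ⟨1, Subtype.ext ?_⟩
    have h : Multiplicative.ofAdd a ^ 2 = 1 := by
      rw [pow_two, ← ofAdd_add, ha, ofAdd_zero]
    simp only [pow_one, SubmonoidClass.mk_pow, OneMemClass.coe_one]
    rw [← zpow_natCast, ← zpow_mul, mul_comm, zpow_mul, zpow_natCast, h, one_zpow]
  obtain ⟨R, hR⟩ := hp.exists_le_sylow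
  have : Unique (Sylow 2 (Multiplicative G)) := Sylow.unique_of_normal P inferInstance
  have : R = P := Subsingleton.elim _ _
  subst this
  exact hR (Subgroup.mem_zpowers _)

lemma sum_univ_eq_zero
    (h : ∀ P : Sylow 2 (Multiplicative G),
        (P : Subgroup (Multiplicative G)) = ⊥ ∨
          ¬ IsCyclic ↥(P : Subgroup (Multiplicative G))) : ∑ g : G, g = 0 := by
  rw [sum_univ_eq_sum_two_torsion]
  by_cases hex : ∃ t : G, t + t = 0 ∧ t ≠ 0
  · obtain ⟨t, ht, ht0⟩ := hex
    obtain ⟨P⟩ : Nonempty (Sylow 2 (Multiplicative G)) := inferInstance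
    have htP := two_torsion_mem_sylow P t ht
    have hnc : ¬ IsCyclic ↥(P : Subgroup (Multiplicative G)) := by
      rcases h P with hP | hP
      · rw [hP, Subgroup.mem_bot] at htP
        exact absurd (ofAdd_eq_one.1 htP) ht0
      · exact hP
    by_contra hsum
    refine hnc (isCyclic_of_unique_involution P.isPGroup' ⟨_, htP⟩ ?_)
    rintro ⟨x, hx⟩ hxx
    by_contra! hne
    have hxx' : x * x = 1 := congrArg Subtype.val hxx
    refine hsum (sum_two_torsion_eq_zero t x.toAdd ht ?_ ht0 ?_ ?_)
    · rw [← toAdd_mul, hxx', toAdd_one]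
    · intro h0; exact hne.1 (Subtype.ext (toAdd_eq_zero.1 h0))
    · rintro rfl; exact hne.2 rfl
  · push Not at hex
    exact Finset.sum_eq_zero fun g hg => hex g (by simpa using hg)

lemma sum_univ_ne_zero
    (h : ∀ P : Sylow 2 (Multiplicative G),
        (P : Subgroup (Multiplicative G)) ≠ ⊥ ∧
          IsCyclic ↥(P : Subgroup (Multiplicative G))) : ∑ g : G, g ≠ 0 := by
  classical
  obtain ⟨P⟩ : Nonempty (Sylow 2 (Multiplicative G)) := inferInstance
  obtain ⟨hbot, hcyc⟩ := h P
  have : Nontrivial (P : Subgroup (Multiplicative G)) :=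
    (Subgroup.nontrivial_iff_ne_bot _).2 hbot
  obtain ⟨k, hk, hcard⟩ := P.isPGroup'.nontrivial_iff_card.1 this
  obtain ⟨t, ht⟩ := exists_prime_orderOf_dvd_card' (G := (P : Subgroup (Multiplicative G))) 2
    (by rw [hcard]; exact dvd_pow_self 2 hk.ne')
  have ht1 : t ≠ 1 := by rintro rfl; simp at ht
  have htt : t ^ 2 = 1 := orderOf_dvd_iff_pow_eq_one.1 ht.dvd
  have huniq : ∀ b : G, b + b = 0 → b = 0 ∨ b = (t : Multiplicative G).toAdd := by
    intro b hb
    by_contra! hne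
    have hbP := two_torsion_mem_sylow P b hb
    have hle := IsCyclic.card_pow_eq_one_le (α := (P : Subgroup (Multiplicative G))) (n := 2)
      (by norm_num)
    have h3 : ({1, t, ⟨_, hbP⟩} : Finset (P : Subgroup (Multiplicative G))).card = 3 := by
      rw [Finset.card_eq_three]
      refine ⟨_, _, _, ht1.symm, ?_, ?_, rfl⟩
      · intro h1
        exact hne.1 (ofAdd_eq_one.1 (congrArg Subtype.val h1).symm)
      · intro h1
        exact hne.2 (congrArg Multiplicative.toAdd (congrArg Subtype.val h1)).symm
    have hsub : ({1, t, ⟨_, hbP⟩} : Finset (P : Subgroup (Multiplicative G))) ⊆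
        Finset.univ.filter (fun a => a ^ 2 = 1) := by
      intro x hx
      simp only [Finset.mem_insert, Finset.mem_singleton] at hx
      simp only [Finset.mem_filter, Finset.mem_univ, true_and]
      rcases hx with rfl | rfl | rfl
      · simp
      · exact htt
      · refine Subtype.ext ?_
        change Multiplicative.ofAdd b ^ 2 = 1
        rw [pow_two, ← ofAdd_add, hb, ofAdd_zero]
    have := Finset.card_le_card hsub
    omega
  have ht0 : (t : Multiplicative G).toAdd ≠ 0 := fun h0 => ht1 (Subtype.ext (toAdd_eq_zero.1 h0))
  have htt' : (t : Multiplicative G).toAdd + (t : Multiplicative G).toAdd = 0 := by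
    have h1 : (t : Multiplicative G) ^ 2 = 1 := congrArg Subtype.val htt
    rw [← toAdd_mul, ← pow_two, h1, toAdd_one]
  have hset : Finset.univ.filter (fun g : G => g + g = 0) =
      {0, (t : Multiplicative G).toAdd} := by
    ext g
    simp only [Finset.mem_filter, Finset.mem_univ, true_and, Finset.mem_insert,
      Finset.mem_singleton]
    constructor
    · exact huniq g
    · rintro (rfl | rfl)
      · simp
      · exact htt'
  rw [sum_univ_eq_sum_two_torsion, hset, Finset.sum_pair ht0.symm, zero_add]
  exact ht0

end Sylow

/-! ### Sums over partial transversals -/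

/-- An injective family of `|G| - 1` elements of `G` misses exactly one element, which accounts for
the difference between its sum and the sum over `G`. -/
lemma exists_missing {α G : Type} [AddCommGroup G] [Fintype G] [DecidableEq G] (T : Finset α)
    (f : α → G) (hf : Set.InjOn f T) (hT : T.card + 1 = Fintype.card G) :
    ∃ r : G, (∀ e ∈ T, f e ≠ r) ∧ ∑ e ∈ T, f e + r = ∑ g : G, g := by
  have hc : ((T.image f)ᶜ).card = 1 := by
    rw [Finset.card_compl, Finset.card_image_of_injOn hf]; omega
  obtain ⟨r, hr⟩ := Finset.card_eq_one.1 hc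
  refine ⟨r, ?_, ?_⟩
  · rintro e he rfl
    have : f e ∈ (T.image f)ᶜ := by rw [hr]; simp
    exact Finset.mem_compl.1 this (Finset.mem_image_of_mem f he)
  · rw [← Finset.sum_add_sum_compl (T.image f), hr, Finset.sum_image hf, Finset.sum_singleton]

lemma sum_eq_of_card {α G : Type} [AddCommGroup G] [Fintype G] [DecidableEq G] (T : Finset α)
    (f : α → G) (hf : Set.InjOn f T) (hT : T.card = Fintype.card G) :
    ∑ e ∈ T, f e = ∑ g : G, g := by
  rw [← Finset.sum_image (f := fun g => g) hf, Finset.eq_univ_of_card (T.image f)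
    (by rw [Finset.card_image_of_injOn hf, hT])]

section PartialTransversal

variable {G : Type} [AddCommGroup G] [Fintype G] [DecidableEq G] {T : Finset (G × G × G)}

lemma IsPT.injOn_row (h : IsPT (fun i j : G => i + j) T) :
    Set.InjOn (fun e : G × G × G => e.1) T := fun e he f hf hef => by
  by_contra hne
  exact (h.2 e he f hf hne).1 hef

lemma IsPT.injOn_col (h : IsPT (fun i j : G => i + j) T) :
    Set.InjOn (fun e : G × G × G => e.2.1) T := fun e he f hf hef => by
  by_contra hne
  exact (h.2 e he f hf hne).2.1 hef

lemma IsPT.injOn_symbol (h : IsPT (fun i j : G => i + j) T) :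
    Set.InjOn (fun e : G × G × G => e.2.2) T := fun e he f hf hef => by
  by_contra hne
  exact (h.2 e he f hf hne).2.2 hef

lemma IsPT.sum_symbol (h : IsPT (fun i j : G => i + j) T) :
    ∑ e ∈ T, e.2.2 = ∑ e ∈ T, e.1 + ∑ e ∈ T, e.2.1 := by
  rw [← Finset.sum_add_distrib]
  refine Finset.sum_congr rfl fun e he => ?_
  obtain ⟨p, _, rfl⟩ := Finset.mem_image.1 (h.1 he)
  rfl

end PartialTransversal


/-- For the Cayley table of a finite abelian group `G`: if the Sylow 2-subgroups of
`G` are trivial or non-cyclic then it has no maximal partial transversal of deficit 1;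
if they are non-trivial and cyclic then it has no transversal. -/
theorem stmt12 {G : Type} [AddCommGroup G] [Fintype G] [DecidableEq G] :
    ((∀ P : Sylow 2 (Multiplicative G),
        (P : Subgroup (Multiplicative G)) = ⊥ ∨
          ¬ IsCyclic ↥(P : Subgroup (Multiplicative G))) →
      ¬ ∃ T : Finset (G × G × G),
          IsMaximalPT (fun i j : G => i + j) T ∧ T.card + 1 = Fintype.card G) ∧
    ((∀ P : Sylow 2 (Multiplicative G),
        (P : Subgroup (Multiplicative G)) ≠ ⊥ ∧
          IsCyclic ↥(P : Subgroup (Multiplicative G))) →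
      ¬ ∃ T : Finset (G × G × G),
          IsPT (fun i j : G => i + j) T ∧ T.card = Fintype.card G) := by
  refine ⟨?_, ?_⟩
  · rintro hS ⟨T, ⟨hT, hmax⟩, hcard⟩
    have hσ := sum_univ_eq_zero hS
    obtain ⟨r, hr, hr'⟩ := exists_missing T _ hT.injOn_row hcard
    obtain ⟨c, hc, hc'⟩ := exists_missing T _ hT.injOn_col hcard
    obtain ⟨s, hs, hs'⟩ := exists_missing T _ hT.injOn_symbol hcard
    have hsum := hT.sum_symbol
    rw [hσ] at hr' hc' hs'
    have hsrc : s = r + c := by grind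
    have hmem : (r, c, s) ∈ lsEntries (fun i j : G => i + j) :=
      Finset.mem_image.2 ⟨(r, c), Finset.mem_univ _, by rw [hsrc]⟩
    refine hmax _ hmem (fun hin => hr _ hin rfl) ⟨Finset.insert_subset hmem hT.1, ?_⟩
    intro e he f hf hef
    rcases Finset.mem_insert.1 he with rfl | he
    · rcases Finset.mem_insert.1 hf with rfl | hf
      · exact absurd rfl hef
      · exact ⟨(hr f hf).symm, (hc f hf).symm, (hs f hf).symm⟩
    · rcases Finset.mem_insert.1 hf with rfl | hf
      · exact ⟨hr e he, hc e he, hs e he⟩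
      · exact hT.2 e he f hf hef
  · rintro hS ⟨T, hT, hcard⟩
    refine sum_univ_ne_zero hS ?_
    have hsum := hT.sum_symbol
    rw [sum_eq_of_card T _ hT.injOn_row hcard, sum_eq_of_card T _ hT.injOn_col hcard,
      sum_eq_of_card T _ hT.injOn_symbol hcard] at hsum
    exact left_eq_add.1 hsum
end
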